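/- arXiv:1205.5424 — 3 statements merged into one kernel-verified Lean document; each statement's English description precedes it below -/
import Mathlib

section
/- (Restricted-sum expansion of the Tutte polynomial, realizable case.) For every vector configuration v : Fin n → V and all real numbers x, y: t(x, y) = ∑_{A ⊆ Fin n with θ̄*(A) = 0 and θ̄(A) = 0} x^{θ*(A)} y^{θ(A)}. -/
open Set Submodule

/-- The reorientation of the vector configuration `v` on the subset `A`:
vectors indexed by `A` are negated. -/
def reorient {n : ℕ} {V : Type*} [AddCommGroup V] (v : Fin n → V) (A : Finset (Fin n)) :
    Fin n → V :=
  fun i => if i ∈ A then -v i else v i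

/-- `a` is orientation-active for the configuration `w`: it is the smallest element of a
positive circuit, i.e. there is a nonnegative linear dependence with positive coefficient
at `a` and zero coefficients below `a`. -/
def OActive {n : ℕ} {V : Type*} [AddCommGroup V] [Module ℝ V]
    (w : Fin n → V) (a : Fin n) : Prop :=
  ∃ c : Fin n → ℝ, (∀ i, 0 ≤ c i) ∧ (∑ i, c i • w i) = 0 ∧ 0 < c a ∧ ∀ i < a, c i = 0

/-- `a` is dually orientation-active for the configuration `w`: it is the smallest element of
a positive cocircuit, i.e. there is a linear functional, nonnegative on the configuration,
positive at `w a` and vanishing on the vectors below `a`. -/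
def ODualActive {n : ℕ} {V : Type*} [AddCommGroup V] [Module ℝ V]
    (w : Fin n → V) (a : Fin n) : Prop :=
  ∃ f : V →ₗ[ℝ] ℝ, (∀ i, 0 ≤ f (w i)) ∧ 0 < f (w a) ∧ ∀ i < a, f (w i) = 0

/-- `θ*(A)`: the number of elements outside `A` that are dually orientation-active for `v_A`. -/
noncomputable def thetaStar {n : ℕ} {V : Type*} [AddCommGroup V] [Module ℝ V]
    (v : Fin n → V) (A : Finset (Fin n)) : ℕ :=
  {a : Fin n | a ∉ A ∧ ODualActive (reorient v A) a}.ncard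

/-- `θ̄*(A)`: the number of elements of `A` that are dually orientation-active for `v_A`. -/
noncomputable def thetaStarBar {n : ℕ} {V : Type*} [AddCommGroup V] [Module ℝ V]
    (v : Fin n → V) (A : Finset (Fin n)) : ℕ :=
  {a : Fin n | a ∈ A ∧ ODualActive (reorient v A) a}.ncard

/-- `θ(A)`: the number of elements outside `A` that are orientation-active for `v_A`. -/
noncomputable def theta {n : ℕ} {V : Type*} [AddCommGroup V] [Module ℝ V]
    (v : Fin n → V) (A : Finset (Fin n)) : ℕ :=
  {a : Fin n | a ∉ A ∧ OActive (reorient v A) a}.ncard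

/-- `θ̄(A)`: the number of elements of `A` that are orientation-active for `v_A`. -/
noncomputable def thetaBar {n : ℕ} {V : Type*} [AddCommGroup V] [Module ℝ V]
    (v : Fin n → V) (A : Finset (Fin n)) : ℕ :=
  {a : Fin n | a ∈ A ∧ OActive (reorient v A) a}.ncard

/-- The rank of a set of indices: the dimension of the span of the corresponding vectors. -/
noncomputable def vrank {n : ℕ} {V : Type*} [AddCommGroup V] [Module ℝ V]
    (v : Fin n → V) (S : Set (Fin n)) : ℕ :=
  Module.finrank ℝ ↥(span ℝ (v '' S))

/-- The Tutte polynomial of the matroid realized by the configuration `v`: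
`t(x,y) = ∑_{A ⊆ Fin n} (x-1)^(r(E) - r(A)) * (y-1)^(|A| - r(A))`. -/
noncomputable def tutteV {n : ℕ} {V : Type*} [AddCommGroup V] [Module ℝ V]
    (v : Fin n → V) (x y : ℝ) : ℝ :=
  ∑ A : Finset (Fin n),
    (x - 1) ^ (vrank v Set.univ - vrank v ↑A) * (y - 1) ^ (A.card - vrank v ↑A)

section helpers
set_option linter.unusedSectionVars false
open Classical in
/-- local weight of an element -/
noncomputable def wtA (x : ℝ) (a m : Prop) : ℝ := if a then (if m then 0 else x) else 1

noncomputable def gA {n : ℕ} (x y : ℝ) (B : Finset (Fin n)) (S T : Fin n → Prop) : ℝ :=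
  ∏ i, (wtA x (T i) (i ∈ B) * wtA y (S i) (i ∈ B))

noncomputable def GG {n : ℕ} {V : Type*} [AddCommGroup V] [Module ℝ V]
    (v : Fin n → V) (x y : ℝ) : ℝ :=
  ∑ A : Finset (Fin n), gA x y A (OActive (reorient v A)) (ODualActive (reorient v A))

def OP {n : ℕ} {V : Type*} [AddCommGroup V] [Module ℝ V]
    (w : Fin n → V) (q : V) (a : Fin n) : Prop :=
  ∃ c : Fin n → ℝ, ∃ s : ℝ, (∀ i, 0 ≤ c i) ∧ 0 ≤ s ∧ (∑ i, c i • w i) + s • q = 0 ∧ 0 < c a ∧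
    ∀ i < a, c i = 0

def DP {n : ℕ} {V : Type*} [AddCommGroup V] [Module ℝ V]
    (w : Fin n → V) (q : V) (a : Fin n) : Prop :=
  ∃ f : V →ₗ[ℝ] ℝ, (∀ i, 0 ≤ f (w i)) ∧ 0 ≤ f q ∧ 0 < f (w a) ∧ ∀ i < a, f (w i) = 0

lemma prod_wtA {n : ℕ} (x : ℝ) (B : Finset (Fin n)) (T : Fin n → Prop) :
    ∏ i, wtA x (T i) (i ∈ B) =
      if {a : Fin n | a ∈ B ∧ T a}.ncard = 0 then x ^ {a : Fin n | a ∉ B ∧ T a}.ncard else 0 := by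
  classical
  split_ifs with h
  · rw [Set.ncard_eq_zero (Set.toFinite _)] at h
    have h1 : ∀ i ∈ (Finset.univ : Finset (Fin n)),
        wtA x (T i) (i ∈ B) = if (i ∉ B ∧ T i) then x else 1 := by
      intro i _
      have : ¬ (i ∈ B ∧ T i) := fun hi => by
        have : i ∈ ({a : Fin n | a ∈ B ∧ T a}) := hi
        rw [h] at this; exact this
      unfold wtA
      by_cases hT : T i <;> by_cases hB : i ∈ B <;> simp_all
    rw [Finset.prod_congr rfl h1, Finset.prod_ite]
    simp only [Finset.prod_const, one_pow, mul_one]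
    rw [Set.ncard_eq_toFinset_card']
    congr 2
    ext; simp
  · have : ({a : Fin n | a ∈ B ∧ T a}).Nonempty := by
      rw [Set.nonempty_iff_ne_empty]
      intro h'; rw [h'] at h; simp at h
    obtain ⟨a, ha, hT⟩ := this
    apply Finset.prod_eq_zero (Finset.mem_univ a)
    simp [wtA, ha, hT]

lemma GG_eq {n : ℕ} {V : Type*} [AddCommGroup V] [Module ℝ V] (v : Fin n → V) (x y : ℝ) :
    GG v x y = ∑ A ∈ Finset.univ.filter
        (fun A : Finset (Fin n) => thetaStarBar v A = 0 ∧ thetaBar v A = 0),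
        x ^ thetaStar v A * y ^ theta v A := by
  rw [Finset.sum_filter, GG]
  apply Finset.sum_congr rfl
  intro A _
  rw [gA, Finset.prod_mul_distrib, prod_wtA, prod_wtA]
  change (if thetaStarBar v A = 0 then x ^ thetaStar v A else 0) *
    (if thetaBar v A = 0 then y ^ theta v A else 0) = _
  by_cases h1 : thetaStarBar v A = 0 <;> by_cases h2 : thetaBar v A = 0 <;> simp [h1, h2]

lemma sum_split {n : ℕ} (f : Finset (Fin (n+1)) → ℝ) :
    ∑ A, f A = ∑ B : Finset (Fin n), (f (B.map Fin.castSuccEmb) +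
      f (insert (Fin.last n) (B.map Fin.castSuccEmb))) := by
  classical
  rw [← Finset.powerset_univ, Fin.univ_castSuccEmb, Finset.cons_eq_insert,
    Finset.sum_powerset_insert (by simp), ← Finset.sum_add_distrib]
  symm
  apply Finset.sum_bij (fun B _ => B.map Fin.castSuccEmb)
  · intro B _
    simp only [Finset.mem_powerset]
    exact Finset.map_subset_map.2 (Finset.subset_univ _)
  · intro B _ C _ h
    exact Finset.map_injective _ h
  · intro A hA
    rw [Finset.mem_powerset, Finset.subset_map_iff] at hA
    obtain ⟨u, _, rfl⟩ := hA
    exact ⟨u, by simp, rfl⟩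
  · intros; rfl

section act
variable {n : ℕ} {V : Type*} [AddCommGroup V] [Module ℝ V]

lemma OActive_castSucc (w : Fin (n+1) → V) (a : Fin n) :
    OActive w a.castSucc ↔ OP (fun i => w i.castSucc) (w (Fin.last n)) a := by
  constructor
  · rintro ⟨c, h0, h1, h2, h3⟩
    refine ⟨fun i => c i.castSucc, c (Fin.last n), fun i => h0 _, h0 _, ?_, h2, ?_⟩
    · rw [← h1, Fin.sum_univ_castSucc]
    · intro i hi; exact h3 _ (by simpa using hi)
  · rintro ⟨c, s, h0, hs, h1, h2, h3⟩
    refine ⟨Fin.snoc (α := fun _ => ℝ) c s, ?_, ?_, ?_, ?_⟩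
    · intro i
      refine Fin.lastCases ?_ (fun i => ?_) i
      · simpa using hs
      · simpa using h0 i
    · rw [Fin.sum_univ_castSucc]; simpa using h1
    · simpa using h2
    · intro i
      refine Fin.lastCases ?_ (fun i => ?_) i
      · intro hi; exact absurd hi (not_lt.2 (Fin.le_last _))
      · intro hi; simpa using h3 i (by simpa using hi)

lemma ODualActive_castSucc (w : Fin (n+1) → V) (a : Fin n) :
    ODualActive w a.castSucc ↔ DP (fun i => w i.castSucc) (w (Fin.last n)) a := by
  constructor
  · rintro ⟨f, h0, h2, h3⟩
    exact ⟨f, fun i => h0 _, h0 _, h2, fun i hi => h3 _ (by simpa using hi)⟩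
  · rintro ⟨f, h0, hs, h2, h3⟩
    refine ⟨f, ?_, h2, ?_⟩
    · intro i
      exact Fin.lastCases hs h0 i
    · intro i
      refine Fin.lastCases ?_ (fun i => ?_) i
      · intro hi; exact absurd hi (not_lt.2 (Fin.le_last _))
      · intro hi; exact h3 i (by simpa using hi)

lemma OActive_last (w : Fin (n+1) → V) :
    OActive w (Fin.last n) ↔ w (Fin.last n) = 0 := by
  constructor
  · rintro ⟨c, h0, h1, h2, h3⟩
    rw [Fin.sum_univ_castSucc, Finset.sum_eq_zero, zero_add] at h1
    · exact (smul_eq_zero.1 h1).resolve_left h2.ne'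
    · intro i _; rw [h3 _ (Fin.castSucc_lt_last i), zero_smul]
  · intro h
    refine ⟨Pi.single (Fin.last n) 1, ?_, ?_, by simp, ?_⟩
    · intro i
      by_cases hi : i = Fin.last n
      · subst hi; simp
      · simp [hi]
    · rw [Fin.sum_univ_castSucc]; simp [h]
    · intro i hi; simp [hi.ne]

lemma ODualActive_last [FiniteDimensional ℝ V] (w : Fin (n+1) → V) :
    ODualActive w (Fin.last n) ↔
      w (Fin.last n) ∉ span ℝ (Set.range fun i : Fin n => w i.castSucc) := by
  constructor
  · rintro ⟨f, h0, h1, h2⟩ h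
    have : span ℝ (Set.range fun i : Fin n => w i.castSucc) ≤ LinearMap.ker f := by
      rw [span_le]; rintro _ ⟨i, rfl⟩
      exact h2 _ (Fin.castSucc_lt_last i)
    have := this h
    rw [LinearMap.mem_ker] at this
    exact h1.ne' this
  · intro h
    obtain ⟨f, hf, hf'⟩ := Submodule.exists_le_ker_of_notMem h
    have hz : ∀ i : Fin n, f (w i.castSucc) = 0 := fun i => hf' (subset_span ⟨i, rfl⟩)
    refine ⟨(f (w (Fin.last n))) • f, ?_, ?_, ?_⟩
    · intro i
      refine Fin.lastCases ?_ (fun i => ?_) i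
      · simpa using mul_self_nonneg _
      · simp [hz]
    · simpa using mul_self_pos.2 hf
    · intro i
      refine Fin.lastCases ?_ (fun i => ?_) i
      · intro hi; exact absurd hi (lt_irrefl _)
      · intro _; simp [hz]

variable (w : Fin n → V) (q : V)

lemma OActive.op {a : Fin n} (h : OActive w a) : OP w q a := by
  obtain ⟨c, h0, h1, h2, h3⟩ := h
  exact ⟨c, 0, h0, le_rfl, by simp [h1], h2, h3⟩

/-- combining a positive circuit through `q` and one through `-q`. -/
lemma comb {a : Fin n} {c c' : Fin n → ℝ} {s t : ℝ} (hc : ∀ i, 0 ≤ c i) (hc' : ∀ i, 0 ≤ c' i)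
    (hs : 0 ≤ s) (ht : 0 < t) (h : (∑ i, c i • w i) + s • q = 0)
    (h' : (∑ i, c' i • w i) + t • (-q) = 0) (ha : 0 < c a) (hl : ∀ i < a, c i = 0)
    (hl' : ∀ i < a, c' i = 0) : OActive w a := by
  refine ⟨fun i => t * c i + s * c' i, ?_, ?_, ?_, ?_⟩
  · intro i; have := hc i; have := hc' i; positivity
  · have e : (∑ i, (t * c i + s * c' i) • w i) =
      t • ((∑ i, c i • w i) + s • q) + s • ((∑ i, c' i • w i) + t • (-q)) := by
      simp only [add_smul, mul_smul, Finset.sum_add_distrib, smul_add, Finset.smul_sum, smul_neg]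
      rw [smul_comm s t q]; abel
    rw [e, h, h']; simp
  · have := hc' a; positivity
  · intro i hi; simp [hl i hi, hl' i hi]

lemma OP_and {a : Fin n} (h : OP w q a) (h' : OP w (-q) a) : OActive w a := by
  obtain ⟨c, s, h0, hs, h1, h2, h3⟩ := h
  obtain ⟨c', t, h0', ht, h1', h2', h3'⟩ := h'
  rcases ht.eq_or_lt with rfl | ht
  · exact ⟨c', h0', by simpa using h1', h2', h3'⟩
  · exact comb w q h0 h0' hs ht h1 h1' h2 h3 h3'

lemma OP_lt {a b : Fin n} (hab : a < b) (h : OP w q a) (h' : OP w (-q) b) :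
    OActive w a ∨ OActive w b := by
  obtain ⟨c, s, h0, hs, h1, h2, h3⟩ := h
  obtain ⟨c', t, h0', ht, h1', h2', h3'⟩ := h'
  rcases ht.eq_or_lt with rfl | ht
  · exact Or.inr ⟨c', h0', by simpa using h1', h2', h3'⟩
  · exact Or.inl (comb w q h0 h0' hs ht h1 h1' h2 h3 (fun i hi => h3' i (hi.trans hab)))

lemma OP_or {a : Fin n} :
    OActive (fun i => (span ℝ {q}).mkQ (w i)) a ↔ OP w q a ∨ OP w (-q) a := by
  have e : ∀ c : Fin n → ℝ, (∑ i, c i • (span ℝ {q}).mkQ (w i)) =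
      (span ℝ {q}).mkQ (∑ i, c i • w i) := by intro c; simp
  constructor
  · rintro ⟨c, h0, h1, h2, h3⟩
    rw [e, ← LinearMap.mem_ker, Submodule.ker_mkQ, mem_span_singleton] at h1
    obtain ⟨s, hs⟩ := h1
    rcases le_total 0 s with h | h
    · right; exact ⟨c, s, h0, h, by rw [← hs]; simp, h2, h3⟩
    · left; exact ⟨c, -s, h0, by linarith, by rw [← hs]; simp, h2, h3⟩
  · have key : ∀ p ∈ span ℝ {q}, OP w p a → OActive (fun i => (span ℝ {q}).mkQ (w i)) a := by
      rintro p hp ⟨c, s, h0, hs, h1, h2, h3⟩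
      refine ⟨c, h0, ?_, h2, h3⟩
      rw [e, ← LinearMap.mem_ker, Submodule.ker_mkQ, eq_neg_of_add_eq_zero_left h1]
      exact neg_mem (smul_mem _ _ hp)
    rintro (h | h)
    · exact key _ (mem_span_singleton_self q) h
    · exact key _ (neg_mem (mem_span_singleton_self q)) h

lemma DP_comb {a : Fin n} {f f' : V →ₗ[ℝ] ℝ} (hf : ∀ i, 0 ≤ f (w i)) (hf' : ∀ i, 0 ≤ f' (w i))
    (hs : 0 ≤ f q) (ht : f' q < 0) (ha : 0 < f (w a)) (hl : ∀ i < a, f (w i) = 0)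
    (hl' : ∀ i < a, f' (w i) = 0) : ODualActive (fun i => (span ℝ {q}).mkQ (w i)) a := by
  have hk : span ℝ {q} ≤ LinearMap.ker ((-f' q) • f + (f q) • f') := by
    rw [span_singleton_le_iff_mem, LinearMap.mem_ker]; simp; ring
  have ht' : 0 < - f' q := by linarith
  refine ⟨(span ℝ {q}).liftQ _ hk, ?_, ?_, ?_⟩
  · intro i
    have := mul_nonneg ht'.le (hf i); have := mul_nonneg hs (hf' i)
    simp only [mkQ_apply, liftQ_apply, LinearMap.add_apply, LinearMap.smul_apply, smul_eq_mul]
    linarith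
  · have := mul_pos ht' ha; have := mul_nonneg hs (hf' a)
    simp only [mkQ_apply, liftQ_apply, LinearMap.add_apply, LinearMap.smul_apply, smul_eq_mul]
    linarith
  · intro i hi
    simp [hl i hi, hl' i hi]

lemma DP_zero {a : Fin n} {f : V →ₗ[ℝ] ℝ} (hf : ∀ i, 0 ≤ f (w i))
    (hs : f q = 0) (ha : 0 < f (w a)) (hl : ∀ i < a, f (w i) = 0) :
    ODualActive (fun i => (span ℝ {q}).mkQ (w i)) a := by
  have hk : span ℝ {q} ≤ LinearMap.ker f := by
    rw [span_singleton_le_iff_mem, LinearMap.mem_ker]; exact hs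
  exact ⟨(span ℝ {q}).liftQ _ hk, by simpa using hf, by simpa using ha, by simpa using hl⟩

lemma ODual_dp {a : Fin n} (h : ODualActive (fun i => (span ℝ {q}).mkQ (w i)) a) :
    DP w q a ∧ DP w (-q) a := by
  obtain ⟨f, h0, h1, h2⟩ := h
  have : (span ℝ {q}).mkQ q = 0 := by
    rw [← LinearMap.mem_ker, Submodule.ker_mkQ]; exact mem_span_singleton_self q
  constructor
  · exact ⟨f.comp (span ℝ {q}).mkQ, h0, by rw [LinearMap.comp_apply, this]; simp, h1, h2⟩
  · exact ⟨f.comp (span ℝ {q}).mkQ, h0, by rw [LinearMap.comp_apply, map_neg, this]; simp, h1, h2⟩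

lemma DP_lt {a b : Fin n} (hab : a ≤ b) (h : DP w q a) (h' : DP w (-q) b) :
    ODualActive (fun i => (span ℝ {q}).mkQ (w i)) a ∨
    ODualActive (fun i => (span ℝ {q}).mkQ (w i)) b := by
  obtain ⟨f, h0, hs, h2, h3⟩ := h
  obtain ⟨f', h0', ht, h2', h3'⟩ := h'
  rw [map_neg, Left.nonneg_neg_iff] at ht
  rcases ht.eq_or_lt with ht | ht
  · exact Or.inr (DP_zero w q h0' ht h2' h3')
  · exact Or.inl (DP_comb w q h0 h0' hs ht h2 h3 (fun i hi => h3' i (hi.trans_le hab)))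

lemma DP_or {a : Fin n} : ODualActive w a ↔ DP w q a ∨ DP w (-q) a := by
  constructor
  · rintro ⟨f, h0, h1, h2⟩
    rcases le_total 0 (f q) with h | h
    · exact Or.inl ⟨f, h0, h, h1, h2⟩
    · exact Or.inr ⟨f, h0, by simpa using h, h1, h2⟩
  · rintro (⟨f, h0, _, h1, h2⟩ | ⟨f, h0, _, h1, h2⟩) <;> exact ⟨f, h0, h1, h2⟩

/-- a positive circuit and a positive cocircuit do not meet. -/
lemma OD_disj {a b : Fin n} (h : OP w q a) (hn : ¬ OActive w a) (h' : DP w q b)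
    (hn' : ¬ ODualActive (fun i => (span ℝ {q}).mkQ (w i)) b) : False := by
  obtain ⟨c, s, h0, hs, h1, h2, h3⟩ := h
  obtain ⟨f, h0', ht, h2', h3'⟩ := h'
  rcases hs.eq_or_lt with rfl | hs
  · exact hn ⟨c, h0, by simpa using h1, h2, h3⟩
  rcases ht.eq_or_lt with ht | ht
  · exact hn' (DP_zero w q h0' ht.symm h2' h3')
  have e := congrArg f h1
  simp only [map_add, map_sum, map_smul, smul_eq_mul, map_zero] at e
  have : 0 ≤ ∑ i, c i * f (w i) := Finset.sum_nonneg fun i _ => mul_nonneg (h0 i) (h0' i)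
  nlinarith [mul_pos hs ht]

/-- If nothing new is activated by `q`, and everything by `-q`. -/
lemma half (h : ∀ a, OP w q a → OActive w a)
    (h' : ∀ a, DP w (-q) a → ODualActive (fun i => (span ℝ {q}).mkQ (w i)) a) :
    OP w q = OActive w ∧ OP w (-q) = OActive (fun i => (span ℝ {q}).mkQ (w i)) ∧
    DP w q = ODualActive w ∧ DP w (-q) = ODualActive (fun i => (span ℝ {q}).mkQ (w i)) := by
  refine ⟨?_, ?_, ?_, ?_⟩ <;> ext a
  · exact ⟨h a, OActive.op w q⟩
  · rw [OP_or]
    exact ⟨Or.inr, fun h1 => h1.elim (fun h2 => OActive.op w _ (h a h2)) id⟩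
  · rw [DP_or w q]
    exact ⟨Or.inl, fun h1 => h1.elim id (fun h2 => (ODual_dp w q (h' a h2)).1)⟩
  · exact ⟨h' a, fun h1 => (ODual_dp w q h1).2⟩

lemma half' (h : ∀ a, OP w (-q) a → OActive w a)
    (h' : ∀ a, DP w q a → ODualActive (fun i => (span ℝ {q}).mkQ (w i)) a) :
    OP w (-q) = OActive w ∧ OP w q = OActive (fun i => (span ℝ {q}).mkQ (w i)) ∧
    DP w (-q) = ODualActive w ∧ DP w q = ODualActive (fun i => (span ℝ {q}).mkQ (w i)) := by
  refine ⟨?_, ?_, ?_, ?_⟩ <;> ext a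
  · exact ⟨h a, OActive.op w _⟩
  · rw [OP_or]
    exact ⟨Or.inl, fun h1 => h1.elim id (fun h2 => OActive.op w _ (h a h2))⟩
  · rw [DP_or w q]
    exact ⟨Or.inr, fun h1 => h1.elim (fun h2 => (ODual_dp w q (h' a h2)).2) id⟩
  · exact ⟨h' a, fun h1 => (ODual_dp w q h1).1⟩

lemma OP_cmp {a b : Fin n} (h : OP w q a) (hn : ¬ OActive w a) (h' : OP w (-q) b)
    (hn' : ¬ OActive w b) : False := by
  rcases lt_trichotomy a b with hab | rfl | hab
  · exact (OP_lt w q hab h h').elim hn hn'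
  · exact hn (OP_and w q h h')
  · exact (OP_lt w (-q) hab h' (by simpa using h)).elim hn' hn

lemma span_neg_sing : span ℝ {-q} = span ℝ {q} := by
  rw [← Set.neg_singleton, Submodule.span_neg]

lemma OD_disj' {a b : Fin n} (h : OP w (-q) a) (hn : ¬ OActive w a) (h' : DP w (-q) b)
    (hn' : ¬ ODualActive (fun i => (span ℝ {q}).mkQ (w i)) b) : False := by
  refine OD_disj w (-q) h hn h' ?_
  rwa [span_neg_sing]

lemma DP_cmp {a b : Fin n} (h : DP w q a)
    (hn : ¬ ODualActive (fun i => (span ℝ {q}).mkQ (w i)) a) (h' : DP w (-q) b)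
    (hn' : ¬ ODualActive (fun i => (span ℝ {q}).mkQ (w i)) b) : False := by
  rcases le_total a b with hab | hab
  · exact (DP_lt w q hab h h').elim hn hn'
  · have := DP_lt w (-q) hab h' (by simpa using h)
    rw [span_neg_sing] at this
    exact this.elim hn' hn

lemma key (g : (Fin n → Prop) → (Fin n → Prop) → ℝ) :
    g (OP w q) (DP w q) + g (OP w (-q)) (DP w (-q)) =
    g (OActive w) (ODualActive w) + g (OActive (fun i => (span ℝ {q}).mkQ (w i)))
      (ODualActive (fun i => (span ℝ {q}).mkQ (w i))) := by
  by_cases h1 : (∀ a, OP w q a → OActive w a) ∧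
      (∀ a, DP w (-q) a → ODualActive (fun i => (span ℝ {q}).mkQ (w i)) a)
  · obtain ⟨e1, e2, e3, e4⟩ := half w q h1.1 h1.2
    rw [e1, e2, e3, e4]
  · have h2 : (∀ a, OP w (-q) a → OActive w a) ∧
      (∀ a, DP w q a → ODualActive (fun i => (span ℝ {q}).mkQ (w i)) a) := by
      rw [not_and_or] at h1
      rcases h1 with h1 | h1 <;> push Not at h1 <;> obtain ⟨a, ha, hn⟩ := h1
      · exact ⟨fun b hb => by_contra fun hb' => OP_cmp w q ha hn hb hb',
          fun b hb => by_contra fun hb' => OD_disj w q ha hn hb hb'⟩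
      · exact ⟨fun b hb => by_contra fun hb' => OD_disj' w q hb hb' ha hn,
          fun b hb => by_contra fun hb' => DP_cmp w q hb hb' ha hn⟩
    obtain ⟨e1, e2, e3, e4⟩ := half' w q h2.1 h2.2
    rw [e1, e2, e3, e4, add_comm]

lemma loop_act : OP w (0 : V) = OActive w ∧ DP w (0 : V) = ODualActive w := by
  constructor <;> ext a
  · exact ⟨fun ⟨c, s, h0, _, h1, h2, h3⟩ => ⟨c, h0, by simpa using h1, h2, h3⟩, OActive.op w _⟩
  · exact ⟨fun ⟨f, h0, _, h1, h2⟩ => ⟨f, h0, h1, h2⟩,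
      fun ⟨f, h0, h1, h2⟩ => ⟨f, h0, by simp, h1, h2⟩⟩

lemma coloop_act [FiniteDimensional ℝ V] (hq : q ∉ span ℝ (Set.range w)) :
    OP w q = OActive w ∧ DP w q = ODualActive w := by
  obtain ⟨f, hf, hf'⟩ := Submodule.exists_le_ker_of_notMem hq
  have hz : ∀ i : Fin n, f (w i) = 0 := fun i => hf' (subset_span ⟨i, rfl⟩)
  constructor <;> ext a
  · refine ⟨?_, OActive.op w _⟩
    rintro ⟨c, s, h0, _, h1, h2, h3⟩
    have e := congrArg f h1
    simp only [map_add, map_sum, map_smul, smul_eq_mul, map_zero, hz, mul_zero,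
      Finset.sum_const_zero, zero_add, mul_eq_zero, hf, or_false] at e
    subst e
    exact ⟨c, h0, by simpa using h1, h2, h3⟩
  · refine ⟨fun ⟨f, h0, _, h1, h2⟩ => ⟨f, h0, h1, h2⟩, ?_⟩
    rintro ⟨k, h0, h1, h2⟩
    refine ⟨k - (k q / f q) • f, ?_, ?_, ?_, ?_⟩
    · simpa [hz] using h0
    · simp [hf]
    · simpa [hz] using h1
    · simpa [hz] using h2

end act

section recs
variable {n : ℕ} {V : Type*} [AddCommGroup V] [Module ℝ V]

lemma reorient_map (v : Fin (n+1) → V) (B : Finset (Fin n)) :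
    (fun i : Fin n => reorient v (B.map Fin.castSuccEmb) i.castSucc) =
      reorient (fun i => v i.castSucc) B := by
  ext i; simp [reorient]

lemma reorient_ins (v : Fin (n+1) → V) (B : Finset (Fin n)) :
    (fun i : Fin n => reorient v (insert (Fin.last n) (B.map Fin.castSuccEmb)) i.castSucc) =
      reorient (fun i => v i.castSucc) B := by
  ext i; simp [reorient]

lemma span_reorient (v : Fin n → V) (B : Finset (Fin n)) :
    span ℝ (Set.range (reorient v B)) = span ℝ (Set.range v) := by
  apply le_antisymm <;> rw [span_le] <;> rintro _ ⟨i, rfl⟩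
  · have : v i ∈ span ℝ (Set.range v) := subset_span ⟨i, rfl⟩
    simp only [reorient]; split_ifs
    · exact neg_mem this
    · exact this
  · have : reorient v B i ∈ span ℝ (Set.range (reorient v B)) := subset_span ⟨i, rfl⟩
    simp only [reorient] at this ⊢; split_ifs at this
    · simpa using neg_mem this
    · exact this

open Classical in
lemma gA_map [FiniteDimensional ℝ V] (v : Fin (n+1) → V) (x y : ℝ) (B : Finset (Fin n)) :
    gA x y (B.map Fin.castSuccEmb) (OActive (reorient v (B.map Fin.castSuccEmb)))
      (ODualActive (reorient v (B.map Fin.castSuccEmb))) =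
    gA x y B (OP (reorient (fun i => v i.castSucc) B) (v (Fin.last n)))
      (DP (reorient (fun i => v i.castSucc) B) (v (Fin.last n))) *
    ((if v (Fin.last n) ∉ span ℝ (Set.range fun i : Fin n => v i.castSucc) then x else 1) *
      (if v (Fin.last n) = 0 then y else 1)) := by
  have hl : reorient v (B.map Fin.castSuccEmb) (Fin.last n) = v (Fin.last n) := by
    simp [reorient]
  rw [gA, Fin.prod_univ_castSucc]
  simp only [OActive_castSucc, ODualActive_castSucc, OActive_last, ODualActive_last, hl,
    reorient_map, span_reorient]
  congr 1
  · simp [gA]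
  · simp [wtA]

open Classical in
lemma gA_ins [FiniteDimensional ℝ V] (v : Fin (n+1) → V) (x y : ℝ) (B : Finset (Fin n)) :
    gA x y (insert (Fin.last n) (B.map Fin.castSuccEmb))
      (OActive (reorient v (insert (Fin.last n) (B.map Fin.castSuccEmb))))
      (ODualActive (reorient v (insert (Fin.last n) (B.map Fin.castSuccEmb)))) =
    gA x y B (OP (reorient (fun i => v i.castSucc) B) (-v (Fin.last n)))
      (DP (reorient (fun i => v i.castSucc) B) (-v (Fin.last n))) *
    ((if v (Fin.last n) ∉ span ℝ (Set.range fun i : Fin n => v i.castSucc) then 0 else 1) *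
      (if v (Fin.last n) = 0 then 0 else 1)) := by
  have hl : reorient v (insert (Fin.last n) (B.map Fin.castSuccEmb)) (Fin.last n) =
      -v (Fin.last n) := by
    simp [reorient]
  rw [gA, Fin.prod_univ_castSucc]
  simp only [OActive_castSucc, ODualActive_castSucc, OActive_last, ODualActive_last, hl,
    reorient_ins, span_reorient]
  congr 1
  · simp [gA]
  · simp [wtA]

lemma GG_split [FiniteDimensional ℝ V] (v : Fin (n+1) → V) (x y : ℝ) :
    (v (Fin.last n) = 0 → GG v x y = y * GG (fun i : Fin n => v i.castSucc) x y) ∧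
    (v (Fin.last n) ∉ span ℝ (Set.range fun i : Fin n => v i.castSucc) →
      GG v x y = x * GG (fun i : Fin n => v i.castSucc) x y) ∧
    (v (Fin.last n) ≠ 0 → v (Fin.last n) ∈ span ℝ (Set.range fun i : Fin n => v i.castSucc) →
      GG v x y = GG (fun i : Fin n => v i.castSucc) x y +
        GG (fun i : Fin n => (span ℝ {v (Fin.last n)}).mkQ (v i.castSucc)) x y) := by
  have h0 : GG v x y = _ := sum_split _
  simp only [gA_map, gA_ins] at h0
  refine ⟨fun h => ?_, fun h => ?_, fun h h' => ?_⟩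
  · rw [h0, GG, Finset.mul_sum]
    apply Finset.sum_congr rfl
    intro B _
    simp only [h, zero_mem, not_true_eq_false, if_true, if_false, (loop_act _).1, (loop_act _).2]
    ring
  · have hne : v (Fin.last n) ≠ 0 := fun h1 => h (by rw [h1]; exact zero_mem _)
    rw [h0, GG, Finset.mul_sum]
    apply Finset.sum_congr rfl
    intro B _
    have hc := coloop_act (reorient (fun i : Fin n => v i.castSucc) B) (v (Fin.last n))
      (by rwa [span_reorient])
    simp only [h, hne, not_false_eq_true, if_true, if_false, hc.1, hc.2]
    ring
  · rw [h0, GG, GG, ← Finset.sum_add_distrib]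
    apply Finset.sum_congr rfl
    intro B _
    simp only [h, h', not_true_eq_false, if_false, mul_one]
    have e : reorient (fun i : Fin n => (span ℝ {v (Fin.last n)}).mkQ (v i.castSucc)) B =
      fun i => (span ℝ {v (Fin.last n)}).mkQ (reorient (fun i : Fin n => v i.castSucc) B i) := by
      ext i; simp only [reorient]; split_ifs <;> simp
    rw [e]
    exact key _ _ (gA x y B)

lemma finrank_quot [FiniteDimensional ℝ V] (P W : Submodule ℝ V) (h : P ≤ W) :
    Module.finrank ℝ W = Module.finrank ℝ (W.map P.mkQ) + Module.finrank ℝ P := by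
  have h1 := LinearMap.finrank_range_add_finrank_ker (P.mkQ.domRestrict W)
  rw [← h1, LinearMap.range_domRestrict, LinearMap.ker_domRestrict, Submodule.ker_mkQ]
  congr 1
  exact (Submodule.comapSubtypeEquivOfLe h).finrank_eq

lemma vrank_map (v : Fin (n+1) → V) (B : Finset (Fin n)) :
    vrank v ↑(B.map Fin.castSuccEmb) = vrank (fun i : Fin n => v i.castSucc) ↑B := by
  rw [vrank, vrank, Finset.coe_map, Set.image_image]; rfl

lemma vrank_quot [FiniteDimensional ℝ V] (v : Fin n → V) (q : V) (S : Set (Fin n)) :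
    Module.finrank ℝ (span ℝ (insert q (v '' S))) =
      vrank (fun i => (span ℝ {q}).mkQ (v i)) S + Module.finrank ℝ (span ℝ {q}) := by
  have : (span ℝ {q}).mkQ q = 0 := by
    rw [← LinearMap.mem_ker, Submodule.ker_mkQ]; exact mem_span_singleton_self q
  rw [finrank_quot (span ℝ {q}) _ (span_mono (by simp)), vrank, Submodule.map_span, Set.image_insert_eq, Set.image_image, this,
    span_insert_zero]

lemma vrank_ins (v : Fin (n+1) → V) (B : Finset (Fin n)) :
    vrank v ↑(insert (Fin.last n) (B.map Fin.castSuccEmb)) =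
      Module.finrank ℝ (span ℝ (insert (v (Fin.last n))
        ((fun i : Fin n => v i.castSucc) '' ↑B))) := by
  rw [vrank, Finset.coe_insert, Set.image_insert_eq, Finset.coe_map, Set.image_image]; rfl

lemma vrank_univ (v : Fin (n+1) → V) :
    vrank v Set.univ =
      Module.finrank ℝ (span ℝ (insert (v (Fin.last n))
        ((fun i : Fin n => v i.castSucc) '' Set.univ))) := by
  have := vrank_ins v Finset.univ
  rw [Finset.coe_univ] at this
  rw [← this]
  congr 1
  ext i; refine Fin.lastCases ?_ (fun i => ?_) i <;> simp

lemma vrank_le_card [FiniteDimensional ℝ V] (v : Fin n → V) (B : Finset (Fin n)) :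
    vrank v ↑B ≤ B.card := by
  classical
  rw [vrank, ← Finset.coe_image]
  exact (finrank_span_finset_le_card _).trans Finset.card_image_le

lemma vrank_le_univ [FiniteDimensional ℝ V] (v : Fin n → V) (B : Set (Fin n)) :
    vrank v B ≤ vrank v Set.univ :=
  Submodule.finrank_mono (span_mono (Set.image_mono (Set.subset_univ _)))

lemma finrank_insert_notMem [FiniteDimensional ℝ V] (s : Set V) (q : V) (h : q ∉ span ℝ s) :
    Module.finrank ℝ (span ℝ (insert q s)) = Module.finrank ℝ (span ℝ s) + 1 := by
  have hq : q ≠ 0 := fun h1 => h (by rw [h1]; exact zero_mem _)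
  have h1 := Submodule.finrank_sup_add_finrank_inf_eq (span ℝ {q}) (span ℝ s)
  have h2 : span ℝ {q} ⊓ span ℝ s = ⊥ := by
    rw [← disjoint_iff, disjoint_comm, Submodule.disjoint_span_singleton' hq]; exact h
  rw [h2, finrank_bot, finrank_span_singleton hq, ← span_union, Set.singleton_union] at h1
  omega

lemma T_split [FiniteDimensional ℝ V] (v : Fin (n+1) → V) (x y : ℝ) :
    (v (Fin.last n) = 0 → tutteV v x y = y * tutteV (fun i : Fin n => v i.castSucc) x y) ∧
    (v (Fin.last n) ∉ span ℝ (Set.range fun i : Fin n => v i.castSucc) →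
      tutteV v x y = x * tutteV (fun i : Fin n => v i.castSucc) x y) ∧
    (v (Fin.last n) ≠ 0 → v (Fin.last n) ∈ span ℝ (Set.range fun i : Fin n => v i.castSucc) →
      tutteV v x y = tutteV (fun i : Fin n => v i.castSucc) x y +
        tutteV (fun i : Fin n => (span ℝ {v (Fin.last n)}).mkQ (v i.castSucc)) x y) := by
  have h0 : tutteV v x y = _ := sum_split _
  have hcard : ∀ B : Finset (Fin n),
      (insert (Fin.last n) (B.map Fin.castSuccEmb)).card = B.card + 1 := by
    intro B; rw [Finset.card_insert_of_notMem (by simp), Finset.card_map]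
  simp only [vrank_map, vrank_ins, vrank_univ, hcard, Finset.card_map] at h0
  refine ⟨fun h => ?_, fun h => ?_, fun h h' => ?_⟩
  · rw [h0, tutteV, Finset.mul_sum]
    apply Finset.sum_congr rfl
    intro B _
    rw [h, span_insert_zero, span_insert_zero]
    have h1 := vrank_le_card (fun i : Fin n => v i.castSucc) B
    change (x-1) ^ (vrank (fun i : Fin n => v i.castSucc) Set.univ - _) * _ +
      (x-1) ^ (vrank (fun i : Fin n => v i.castSucc) Set.univ -
        vrank (fun i : Fin n => v i.castSucc) ↑B) *
        (y - 1) ^ (B.card + 1 - vrank (fun i : Fin n => v i.castSucc) ↑B) = _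
    rw [Nat.sub_add_comm h1, pow_succ]; ring
  · rw [h0, tutteV, Finset.mul_sum]
    apply Finset.sum_congr rfl
    intro B _
    rw [finrank_insert_notMem _ _ (by rwa [Set.image_univ]), finrank_insert_notMem _ _
      (fun hm => h (span_mono (Set.image_subset_range _ _) hm))]
    have h1 := vrank_le_univ (fun i : Fin n => v i.castSucc) ↑B
    change (x-1) ^ (vrank (fun i : Fin n => v i.castSucc) Set.univ + 1 - _) * _ +
      (x-1) ^ (vrank (fun i : Fin n => v i.castSucc) Set.univ + 1 -
        (vrank (fun i : Fin n => v i.castSucc) ↑B + 1)) *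
        (y - 1) ^ (B.card + 1 - (vrank (fun i : Fin n => v i.castSucc) ↑B + 1)) = _
    rw [Nat.sub_add_comm h1, pow_succ, Nat.add_sub_add_right, Nat.add_sub_add_right]; ring
  · rw [h0, tutteV, tutteV, ← Finset.sum_add_distrib]
    apply Finset.sum_congr rfl
    intro B _
    congr 1
    · rw [span_insert_eq_span (by rwa [Set.image_univ])]; rfl
    · rw [vrank_quot, vrank_quot, finrank_span_singleton h, Nat.add_sub_add_right,
        Nat.add_sub_add_right]
end recs

lemma tutte_eq_GG {n : ℕ} : ∀ {V : Type*} [AddCommGroup V] [Module ℝ V] [FiniteDimensional ℝ V]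
    (v : Fin n → V) (x y : ℝ), tutteV v x y = GG v x y := by
  induction n with
  | zero =>
    intro V _ _ _ v x y
    have hr : vrank v Set.univ = 0 := by
      rw [vrank, Set.eq_empty_of_isEmpty (Set.univ : Set (Fin 0))]; simp
    have hu : (Finset.univ : Finset (Finset (Fin 0))) = {∅} := rfl
    rw [tutteV, GG, hu, Finset.sum_singleton, Finset.sum_singleton, hr]
    simp [gA]
  | succ n ih =>
    intro V _ _ _ v x y
    obtain ⟨t1, t2, t3⟩ := T_split v x y
    obtain ⟨g1, g2, g3⟩ := GG_split v x y
    by_cases h : v (Fin.last n) = 0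
    · rw [t1 h, g1 h, ih]
    · by_cases h' : v (Fin.last n) ∈ span ℝ (Set.range fun i : Fin n => v i.castSucc)
      · rw [t3 h h', g3 h h', ih, ih]
      · rw [t2 h', g2 h', ih]

end helpers

/-- restricted-sum expansion of the Tutte polynomial:
`t(x, y) = ∑_{A : θ̄*(A) = 0, θ̄(A) = 0} x^θ*(A) y^θ(A)`. -/
theorem statement11 {n : ℕ} {V : Type*} [AddCommGroup V] [Module ℝ V] [FiniteDimensional ℝ V]
    (v : Fin n → V) (x y : ℝ) :
    tutteV v x y =
      ∑ A ∈ Finset.univ.filter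
        (fun A : Finset (Fin n) => thetaStarBar v A = 0 ∧ thetaBar v A = 0),
        x ^ thetaStar v A * y ^ theta v A := by
  rw [tutte_eq_GG, GG_eq]
end

section
/- (4-variable expansion for oriented matroid perspectives, realizable case.) For every vector configuration v : Fin n → V, every linear map π : V →ₗ[ℝ] W with v' = π ∘ v, and all real numbers x, u, y, w: t(M,M'; x+u, y+w, 1) = ∑_{A ⊆ Fin n} x^{θ*_{M'}(A)} · u^{θ̄*_{M'}(A)} · y^{θ_M(A)} · w^{θ̄_M(A)}. -/
open Set Submodule

/-- The evaluation at `z = 1` of the 3-variable Tutte polynomial of the oriented matroid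
perspective realized by the configurations `v` (for `M`) and `v'` (for `M'`):
`t(M,M';x,y,1) = ∑_{A ⊆ Fin n} (x-1)^(r'(E) - r'(A)) * (y-1)^(|A| - r(A))`. -/
noncomputable def tuttePerspV {n : ℕ} {V W : Type*} [AddCommGroup V] [Module ℝ V]
    [AddCommGroup W] [Module ℝ W] (v : Fin n → V) (v' : Fin n → W) (x y : ℝ) : ℝ :=
  ∑ A : Finset (Fin n),
    (x - 1) ^ (vrank v' Set.univ - vrank v' ↑A) * (y - 1) ^ (A.card - vrank v ↑A)


/-- Relative orientation activity on the ground set `S`, modulo `K`. -/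
def OA {n : ℕ} {V : Type*} [AddCommGroup V] [Module ℝ V] (v : Fin n → V)
    (S : Finset (Fin n)) (K : Submodule ℝ V) (A : Finset (Fin n)) (a : Fin n) : Prop :=
  ∃ c : Fin n → ℝ, (∀ i ∈ S, 0 ≤ c i) ∧ (∑ i ∈ S, c i • reorient v A i) ∈ K ∧ 0 < c a ∧
    ∀ i ∈ S, i < a → c i = 0

/-- Relative dual orientation activity on the ground set `S`, modulo `K`. -/
def DA {n : ℕ} {V : Type*} [AddCommGroup V] [Module ℝ V] (v : Fin n → V)
    (S : Finset (Fin n)) (K : Submodule ℝ V) (A : Finset (Fin n)) (a : Fin n) : Prop :=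
  ∃ f : V →ₗ[ℝ] ℝ, (∀ k ∈ K, f k = 0) ∧ (∀ i ∈ S, 0 ≤ f (reorient v A i)) ∧
    0 < f (reorient v A a) ∧ ∀ i ∈ S, i < a → f (reorient v A i) = 0

def QO {n : ℕ} {V : Type*} [AddCommGroup V] [Module ℝ V] (v : Fin n → V)
    (S : Finset (Fin n)) (K : Submodule ℝ V) (A : Finset (Fin n)) (e a : Fin n) (t : ℝ) : Prop :=
  ∃ c : Fin n → ℝ, (∀ i ∈ S, 0 ≤ c i) ∧ (∑ i ∈ S, c i • reorient v A i) + t • v e ∈ K ∧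
    0 < c a ∧ ∀ i ∈ S, i < a → c i = 0

def QD {n : ℕ} {V : Type*} [AddCommGroup V] [Module ℝ V] (v : Fin n → V)
    (S : Finset (Fin n)) (K : Submodule ℝ V) (A : Finset (Fin n)) (e a : Fin n) (t : ℝ) : Prop :=
  ∃ f : V →ₗ[ℝ] ℝ, (∀ k ∈ K, f k = 0) ∧ (∀ i ∈ S, 0 ≤ f (reorient v A i)) ∧
    0 < f (reorient v A a) ∧ (∀ i ∈ S, i < a → f (reorient v A i) = 0) ∧ f (v e) = t

section helpers
variable {n : ℕ} {V W : Type*} [AddCommGroup V] [Module ℝ V] [AddCommGroup W] [Module ℝ W]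

lemma OA_insert (v : Fin n → V) {S : Finset (Fin n)} (K : Submodule ℝ V) {A B : Finset (Fin n)}
    {e a : Fin n} {σ : ℝ} (heS : e ∉ S) (hae : a < e)
    (hB : ∀ i ∈ S, reorient v B i = reorient v A i) (hσ : reorient v B e = σ • v e) :
    OA v (insert e S) K B a ↔ ∃ t, 0 ≤ t ∧ QO v S K A e a (σ * t) := by
  constructor
  · rintro ⟨c, h0, hK, ha, hz⟩
    refine ⟨c e, h0 e (Finset.mem_insert_self _ _), c,
      fun i hi => h0 i (Finset.mem_insert_of_mem hi), ?_, ha,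
      fun i hi => hz i (Finset.mem_insert_of_mem hi)⟩
    rw [Finset.sum_insert heS, hσ, smul_smul, Finset.sum_congr rfl (fun i hi => by rw [hB i hi]),
      add_comm, mul_comm] at hK
    exact hK
  · rintro ⟨t, ht, c, h0, hK, ha, hz⟩
    have hne : ∀ i ∈ S, i ≠ e := fun i hi h => heS (h ▸ hi)
    refine ⟨Function.update c e t, ?_, ?_, ?_, ?_⟩
    · intro i hi
      rcases Finset.mem_insert.1 hi with rfl | hi
      · simpa using ht
      · rw [Function.update_of_ne (hne i hi)]; exact h0 i hi
    · rw [Finset.sum_insert heS, hσ, smul_smul, Function.update_self,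
        Finset.sum_congr rfl (fun i hi => by rw [hB i hi, Function.update_of_ne (hne i hi)]),
        add_comm, mul_comm]
      exact hK
    · rw [Function.update_of_ne hae.ne]; exact ha
    · intro i hi hia
      rcases Finset.mem_insert.1 hi with rfl | hi
      · exact absurd hia hae.not_gt
      · rw [Function.update_of_ne (hne i hi)]; exact hz i hi hia

lemma OA_del (v : Fin n → V) {S : Finset (Fin n)} (K : Submodule ℝ V) {A : Finset (Fin n)}
    (e a : Fin n) : OA v S K A a ↔ QO v S K A e a 0 := by
  simp [OA, QO]

lemma OA_con (v : Fin n → V) {S : Finset (Fin n)} (K : Submodule ℝ V) {A : Finset (Fin n)}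
    (e a : Fin n) : OA v S (K ⊔ span ℝ {v e}) A a ↔ ∃ t, QO v S K A e a t := by
  constructor
  · rintro ⟨c, h0, hK, ha, hz⟩
    obtain ⟨k, hk, l, hl, hs⟩ := Submodule.mem_sup.1 hK
    obtain ⟨r, rfl⟩ := Submodule.mem_span_singleton.1 hl
    refine ⟨-r, c, h0, ?_, ha, hz⟩
    rw [← hs]
    simpa using hk
  · rintro ⟨t, c, h0, hK, ha, hz⟩
    refine ⟨c, h0, ?_, ha, hz⟩
    refine Submodule.mem_sup.2 ⟨_, hK, (-t) • v e,
      Submodule.smul_mem _ _ (Submodule.mem_span_singleton_self _), ?_⟩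
    simp

lemma DA_insert (v : Fin n → V) {S : Finset (Fin n)} (K : Submodule ℝ V) {A B : Finset (Fin n)}
    {e a : Fin n} {σ : ℝ} (ha : a ∈ S) (hae : a < e) (hσσ : σ * σ = 1)
    (hB : ∀ i ∈ S, reorient v B i = reorient v A i) (hσ : reorient v B e = σ • v e) :
    DA v (insert e S) K B a ↔ ∃ t, 0 ≤ t ∧ QD v S K A e a (σ * t) := by
  constructor
  · rintro ⟨f, hK, h0, hfa, hz⟩
    refine ⟨σ * f (v e), ?_, f, hK, fun i hi => ?_, ?_, fun i hi hia => ?_, ?_⟩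
    · have := h0 e (Finset.mem_insert_self _ _)
      rw [hσ, map_smul] at this
      exact this
    · rw [← hB i hi]; exact h0 i (Finset.mem_insert_of_mem hi)
    · rw [← hB a ha]; exact hfa
    · rw [← hB i hi]; exact hz i (Finset.mem_insert_of_mem hi) hia
    · rw [← mul_assoc, hσσ, one_mul]
  · rintro ⟨t, ht, f, hK, h0, hfa, hz, hfe⟩
    refine ⟨f, hK, fun i hi => ?_, ?_, fun i hi hia => ?_⟩
    · rcases Finset.mem_insert.1 hi with rfl | hi
      · rw [hσ, map_smul, hfe, smul_eq_mul, ← mul_assoc, hσσ, one_mul]; exact ht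
      · rw [hB i hi]; exact h0 i hi
    · rw [hB a ha]; exact hfa
    · rcases Finset.mem_insert.1 hi with rfl | hi
      · exact absurd hia hae.not_gt
      · rw [hB i hi]; exact hz i hi hia

lemma DA_del (v : Fin n → V) {S : Finset (Fin n)} (K : Submodule ℝ V) {A : Finset (Fin n)}
    (e a : Fin n) : DA v S K A a ↔ ∃ t, QD v S K A e a t := by
  simp [DA, QD]

lemma DA_con (v : Fin n → V) {S : Finset (Fin n)} (K : Submodule ℝ V) {A : Finset (Fin n)}
    (e a : Fin n) : DA v S (K ⊔ span ℝ {v e}) A a ↔ QD v S K A e a 0 := by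
  constructor
  · rintro ⟨f, hK, h0, hfa, hz⟩
    exact ⟨f, fun k hk => hK k (Submodule.mem_sup_left hk), h0, hfa, hz,
      hK _ (Submodule.mem_sup_right (Submodule.mem_span_singleton_self _))⟩
  · rintro ⟨f, hK, h0, hfa, hz, he⟩
    refine ⟨f, fun k hk => ?_, h0, hfa, hz⟩
    obtain ⟨k', hk', l, hl, rfl⟩ := Submodule.mem_sup.1 hk
    obtain ⟨r, rfl⟩ := Submodule.mem_span_singleton.1 hl
    simp [hK k' hk', he]

lemma QO_cone (v : Fin n → V) {S : Finset (Fin n)} (K : Submodule ℝ V) {A : Finset (Fin n)}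
    (e a b : Fin n) (hb : b ∈ S) (ha : a ∈ S) (hab : a ≤ b) {s t p q : ℝ} (hp : 0 < p) (hq : 0 < q)
    (h : (QO v S K A e a s ∧ QO v S K A e b t) ) :
    QO v S K A e a (p * s + q * t) := by
  obtain ⟨⟨c, h0, hK, hca, hz⟩, ⟨d, h0', hK', hdb, hz'⟩⟩ := h
  refine ⟨fun i => p * c i + q * d i, fun i hi => ?_, ?_, ?_, fun i hi hia => ?_⟩
  · have := h0 i hi; have := h0' i hi; positivity
  · have := K.add_mem (K.smul_mem p hK) (K.smul_mem q hK')
    convert this using 1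
    simp only [add_smul, smul_add, Finset.sum_add_distrib, Finset.smul_sum, smul_smul]
    abel
  · have := h0' a ha; positivity
  · simp [hz i hi hia, hz' i hi (hia.trans_le hab)]

lemma QD_cone (v : Fin n → V) {S : Finset (Fin n)} (K : Submodule ℝ V) {A : Finset (Fin n)}
    (e a b : Fin n) (hb : b ∈ S) (ha : a ∈ S) (hab : a ≤ b) {s t p q : ℝ} (hp : 0 < p) (hq : 0 < q)
    (h : (QD v S K A e a s ∧ QD v S K A e b t) ) :
    QD v S K A e a (p * s + q * t) := by
  obtain ⟨⟨f, hK, h0, hca, hz, he⟩, ⟨g, hK', h0', hdb, hz', he'⟩⟩ := h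
  refine ⟨p • f + q • g, fun k hk => ?_, fun i hi => ?_, ?_, fun i hi hia => ?_, ?_⟩
  · simp [hK k hk, hK' k hk]
  · have := h0 i hi; have := h0' i hi
    simp only [LinearMap.add_apply, LinearMap.smul_apply, smul_eq_mul]; positivity
  · have := h0' a ha
    simp only [LinearMap.add_apply, LinearMap.smul_apply, smul_eq_mul]; positivity
  · simp [hz i hi hia, hz' i hi (hia.trans_le hab)]
  · simp [he, he']

lemma reorient_map_s13 (π : V →ₗ[ℝ] W) (v : Fin n → V) (A : Finset (Fin n)) (i : Fin n) :
    reorient (π ∘ v) A i = π (reorient v A i) := by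
  unfold reorient; split_ifs <;> simp

lemma Q_orth (v : Fin n → V) (π : V →ₗ[ℝ] W) {S : Finset (Fin n)} (K : Submodule ℝ V)
    {A : Finset (Fin n)} (e a b : Fin n) {s t : ℝ}
    (h : QO v S K A e a s) (h' : QD (π ∘ v) S (K.map π) A e b t) : s * t ≤ 0 := by
  obtain ⟨c, h0, hK, hca, hz⟩ := h
  obtain ⟨f, hfK, hf0, hfb, hfz, he⟩ := h'
  have h1 := hfK _ (Submodule.mem_map_of_mem hK)
  have he' : f (π (v e)) = t := he
  simp only [map_add, map_sum, map_smul, he', smul_eq_mul] at h1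
  have : 0 ≤ ∑ i ∈ S, c i * f (π (reorient v A i)) := Finset.sum_nonneg fun i hi => by
    have := hf0 i hi
    rw [reorient_map_s13] at this
    exact mul_nonneg (h0 i hi) this
  linarith

/-- chain lemma -/
lemma chain (S : Finset (Fin n)) (Q : Fin n → ℝ → Prop)
    (hQ : ∀ a b, b ∈ S → a ∈ S → a ≤ b → ∀ s t p q : ℝ, 0 < p → 0 < q → (Q a s ∧ Q b t) →
      Q a (p * s + q * t)) :
    (∀ a ∈ S, ∀ t, 0 ≤ t → Q a t → Q a 0) ∨ (∀ a ∈ S, ∀ t, t ≤ 0 → Q a t → Q a 0) := by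
  by_contra! h
  obtain ⟨⟨a, ha, s, hs, hQa, hna⟩, ⟨b, hb, t, ht, hQb, hnb⟩⟩ := h
  have hs : 0 < s := lt_of_le_of_ne hs (fun h => hna (h ▸ hQa))
  have ht : 0 < -t := by
    have : t < 0 := lt_of_le_of_ne ht (fun h => hnb (h ▸ hQb))
    linarith
  rcases le_total a b with hab | hab
  · have := hQ a b hb ha hab s t (-t) s ht hs ⟨hQa, hQb⟩
    exact hna (by convert this using 1; ring)
  · have := hQ b a ha hb hab t s s (-t) hs ht ⟨hQb, hQa⟩
    exact hnb (by convert this using 1; ring)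

lemma align (S : Finset (Fin n)) (Q R : Fin n → ℝ → Prop)
    (hQ : ∀ a b, b ∈ S → a ∈ S → a ≤ b → ∀ s t p q : ℝ, 0 < p → 0 < q → (Q a s ∧ Q b t) →
      Q a (p * s + q * t))
    (hR : ∀ a b, b ∈ S → a ∈ S → a ≤ b → ∀ s t p q : ℝ, 0 < p → 0 < q → (R a s ∧ R b t) →
      R a (p * s + q * t))
    (ho : ∀ a b s t, Q a s → R b t → s * t ≤ 0) :
    ((∀ a ∈ S, ∀ t, 0 ≤ t → Q a t → Q a 0) ∧ (∀ a ∈ S, ∀ t, t ≤ 0 → R a t → R a 0)) ∨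
    ((∀ a ∈ S, ∀ t, t ≤ 0 → Q a t → Q a 0) ∧ (∀ a ∈ S, ∀ t, 0 ≤ t → R a t → R a 0)) := by
  by_cases h1 : ∀ a ∈ S, ∀ t, 0 ≤ t → Q a t → Q a 0
  · by_cases h2 : ∀ a ∈ S, ∀ t, t ≤ 0 → Q a t → Q a 0
    · rcases chain S R hR with h | h
      · exact Or.inr ⟨h2, h⟩
      · exact Or.inl ⟨h1, h⟩
    · refine Or.inl ⟨h1, ?_⟩
      push Not at h2
      obtain ⟨a, ha, s, hs, hQa, hna⟩ := h2
      have hs : s < 0 := lt_of_le_of_ne hs (fun h => hna (h ▸ hQa))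
      intro b hb t ht hRb
      have := ho a b s t hQa hRb
      have : t = 0 := by nlinarith
      exact this ▸ hRb
  · have h2 := (chain S Q hQ).resolve_left h1
    refine Or.inr ⟨h2, ?_⟩
    push Not at h1
    obtain ⟨a, ha, s, hs, hQa, hna⟩ := h1
    have hs : 0 < s := lt_of_le_of_ne hs (fun h => hna (h ▸ hQa))
    intro b hb t ht hRb
    have := ho a b s t hQa hRb
    have : t = 0 := by nlinarith
    exact this ▸ hRb

lemma reorient_notMem (v : Fin n → V) {A : Finset (Fin n)} {e : Fin n} (h : e ∉ A) :
    reorient v A e = (1 : ℝ) • v e := by simp [reorient, h]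

lemma reorient_mem (v : Fin n → V) {A : Finset (Fin n)} {e : Fin n} (h : e ∈ A) :
    reorient v A e = (-1 : ℝ) • v e := by simp [reorient, h]

lemma reorient_insert (v : Fin n → V) {A : Finset (Fin n)} {e i : Fin n} (h : i ≠ e) :
    reorient v (insert e A) i = reorient v A i := by simp [reorient, h]

/-- deletion/contraction of activities at the largest element -/
lemma delcon (v : Fin n → V) (π : V →ₗ[ℝ] W) {S : Finset (Fin n)} (K : Submodule ℝ V)
    {A : Finset (Fin n)} (e : Fin n) (hS : ∀ i ∈ S, i < e) (hA : A ⊆ S) :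
    (∀ a ∈ S, (OA v (insert e S) K A a ↔ OA v S K A a) ∧
      (OA v (insert e S) K (insert e A) a ↔ OA v S (K ⊔ span ℝ {v e}) A a) ∧
      (DA (π ∘ v) (insert e S) (K.map π) A a ↔ DA (π ∘ v) S (K.map π) A a) ∧
      (DA (π ∘ v) (insert e S) (K.map π) (insert e A) a ↔
        DA (π ∘ v) S ((K ⊔ span ℝ {v e}).map π) A a)) ∨
    (∀ a ∈ S, (OA v (insert e S) K (insert e A) a ↔ OA v S K A a) ∧
      (OA v (insert e S) K A a ↔ OA v S (K ⊔ span ℝ {v e}) A a) ∧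
      (DA (π ∘ v) (insert e S) (K.map π) (insert e A) a ↔ DA (π ∘ v) S (K.map π) A a) ∧
      (DA (π ∘ v) (insert e S) (K.map π) A a ↔
        DA (π ∘ v) S ((K ⊔ span ℝ {v e}).map π) A a)) := by
  have heS : e ∉ S := fun h => (hS e h).false
  have heA : e ∉ A := fun h => heS (hA h)
  have hne : ∀ i ∈ S, i ≠ e := fun i hi => (hS i hi).ne
  have hm : (K ⊔ span ℝ {v e}).map π = K.map π ⊔ span ℝ {(π ∘ v) e} := by
    rw [Submodule.map_sup, Submodule.map_span, Set.image_singleton]; rfl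
  have o1 : ∀ a ∈ S, (OA v (insert e S) K A a ↔ ∃ t, 0 ≤ t ∧ QO v S K A e a (1 * t)) :=
    fun a ha => OA_insert v K heS (hS a ha) (fun i hi => rfl) (reorient_notMem v heA)
  have o2 : ∀ a ∈ S, (OA v (insert e S) K (insert e A) a ↔ ∃ t, 0 ≤ t ∧ QO v S K A e a (-1 * t)) :=
    fun a ha => OA_insert v K heS (hS a ha) (fun i hi => reorient_insert v (hne i hi))
      (reorient_mem v (Finset.mem_insert_self _ _))
  have d1 : ∀ a ∈ S, (DA (π ∘ v) (insert e S) (K.map π) A a ↔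
      ∃ t, 0 ≤ t ∧ QD (π ∘ v) S (K.map π) A e a (1 * t)) :=
    fun a ha => DA_insert _ _ ha (hS a ha) (by norm_num) (fun i hi => rfl) (reorient_notMem _ heA)
  have d2 : ∀ a ∈ S, (DA (π ∘ v) (insert e S) (K.map π) (insert e A) a ↔
      ∃ t, 0 ≤ t ∧ QD (π ∘ v) S (K.map π) A e a (-1 * t)) :=
    fun a ha => DA_insert _ _ ha (hS a ha) (by norm_num)
      (fun i hi => reorient_insert _ (hne i hi))
      (reorient_mem _ (Finset.mem_insert_self _ _))
  rw [hm]
  have pos : ∀ Q : ℝ → Prop, (∀ t, 0 ≤ t → Q t → Q 0) →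
      ((∃ t, 0 ≤ t ∧ Q (1 * t)) ↔ Q 0) ∧ ((∃ t, 0 ≤ t ∧ Q (-1 * t)) ↔ ∃ t, Q t) := by
    intro Q h
    refine ⟨⟨?_, fun h0 => ⟨0, le_rfl, by simpa using h0⟩⟩, ⟨?_, ?_⟩⟩
    · rintro ⟨t, ht, hq⟩; exact h t ht (by simpa using hq)
    · rintro ⟨t, ht, hq⟩; exact ⟨_, hq⟩
    · rintro ⟨t, hq⟩
      rcases le_total 0 t with ht | ht
      · exact ⟨0, le_rfl, by simpa using h t ht hq⟩
      · exact ⟨-t, by linarith, by simpa using hq⟩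
  have neg : ∀ Q : ℝ → Prop, (∀ t, t ≤ 0 → Q t → Q 0) →
      ((∃ t, 0 ≤ t ∧ Q (-1 * t)) ↔ Q 0) ∧ ((∃ t, 0 ≤ t ∧ Q (1 * t)) ↔ ∃ t, Q t) := by
    intro Q h
    refine ⟨⟨?_, fun h0 => ⟨0, le_rfl, by simpa using h0⟩⟩, ⟨?_, ?_⟩⟩
    · rintro ⟨t, ht, hq⟩; exact h _ (by linarith) hq
    · rintro ⟨t, ht, hq⟩; exact ⟨_, hq⟩
    · rintro ⟨t, hq⟩
      rcases le_total 0 t with ht | ht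
      · exact ⟨t, ht, by simpa using hq⟩
      · exact ⟨0, le_rfl, by simpa using h t ht hq⟩
  rcases align S (QO v S K A e) (QD (π ∘ v) S (K.map π) A e)
    (fun a b hb ha hab s t p q hp hq => QO_cone v K e a b hb ha hab hp hq)
    (fun a b hb ha hab s t p q hp hq => QD_cone _ _ e a b hb ha hab hp hq)
    (fun a b s t => Q_orth v π K e a b) with ⟨h1, h2⟩ | ⟨h1, h2⟩
  · left
    intro a ha
    have p := pos _ (h1 a ha)
    have q := neg _ (h2 a ha)
    rw [o1 a ha, o2 a ha, d1 a ha, d2 a ha, OA_del v K e, OA_con, DA_del _ _ e, DA_con]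
    exact ⟨p.1, p.2, q.2, q.1⟩
  · right
    intro a ha
    have p := neg _ (h1 a ha)
    have q := pos _ (h2 a ha)
    rw [o1 a ha, o2 a ha, d1 a ha, d2 a ha, OA_del v K e, OA_con, DA_del _ _ e, DA_con]
    exact ⟨p.1, p.2, q.2, q.1⟩

lemma OA_top (v : Fin n → V) {S : Finset (Fin n)} (K : Submodule ℝ V) (B : Finset (Fin n))
    (e : Fin n) (hS : ∀ i ∈ S, i < e) : OA v (insert e S) K B e ↔ v e ∈ K := by
  have heS : e ∉ S := fun h => (hS e h).false
  have hr : reorient v B e ∈ K ↔ v e ∈ K := by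
    unfold reorient; split_ifs <;> simp
  rw [← hr]
  constructor
  · rintro ⟨c, h0, hK, ha, hz⟩
    rw [Finset.sum_insert heS, Finset.sum_eq_zero (fun i hi => by
      rw [hz i (Finset.mem_insert_of_mem hi) (hS i hi), zero_smul]), add_zero] at hK
    exact (K.smul_mem_iff ha.ne').1 hK
  · intro h
    refine ⟨fun i => if i = e then 1 else 0, fun i _ => by dsimp only; split_ifs <;> norm_num,
      ?_, by simp, fun i hi hie => by simp [hie.ne]⟩
    rw [Finset.sum_insert heS, Finset.sum_eq_zero (fun i hi => by simp [(hS i hi).ne])]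
    simpa using h

lemma DA_top (v : Fin n → V) {S : Finset (Fin n)} (K : Submodule ℝ V) (B : Finset (Fin n))
    (e : Fin n) (hS : ∀ i ∈ S, i < e) :
    DA v (insert e S) K B e ↔ v e ∉ span ℝ (v '' (S : Set (Fin n))) ⊔ K := by
  have heS : e ∉ S := fun h => (hS e h).false
  have hz0 : ∀ (f : V →ₗ[ℝ] ℝ) i, f (reorient v B i) = 0 ↔ f (v i) = 0 := by
    intro f i
    unfold reorient; split_ifs <;> simp
  constructor
  · rintro ⟨f, hK, h0, hfe, hz⟩ hmem
    have hle : span ℝ (v '' (S : Set (Fin n))) ⊔ K ≤ LinearMap.ker f := by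
      refine sup_le (Submodule.span_le.2 ?_) (fun k hk => hK k hk)
      rintro _ ⟨i, hi, rfl⟩
      exact (hz0 f i).1 (hz i (Finset.mem_insert_of_mem hi) (hS i hi))
    exact hfe.ne' ((hz0 f e).2 (hle hmem))
  · intro h
    obtain ⟨g, hg, hle⟩ := Submodule.exists_le_ker_of_notMem h
    have hg' : g (reorient v B e) ≠ 0 := fun h => hg ((hz0 g e).1 h)
    have key : ∀ i ∈ S, g (reorient v B i) = 0 := fun i hi =>
      (hz0 g i).2 (hle (Submodule.mem_sup_left (Submodule.subset_span ⟨i, hi, rfl⟩)))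
    refine ⟨g (reorient v B e) • g, fun k hk => ?_, fun i hi => ?_, ?_, fun i hi hie => ?_⟩
    · have : g k = 0 := hle (Submodule.mem_sup_right hk)
      simp [this]
    · rcases Finset.mem_insert.1 hi with rfl | hi
      · simpa using mul_self_nonneg _
      · simp [key i hi]
    · simpa using mul_self_pos.2 hg'
    · rcases Finset.mem_insert.1 hi with rfl | hi
      · exact absurd hie (lt_irrefl _)
      · simp [key i hi]

/-- If `e` is a coloop of `M'`, deletion and contraction have the same activities. -/
lemma coloop_eq (v : Fin n → V) (π : V →ₗ[ℝ] W) {S : Finset (Fin n)} (K : Submodule ℝ V)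
    {A : Finset (Fin n)} (e : Fin n)
    (h : (π ∘ v) e ∉ span ℝ ((π ∘ v) '' (S : Set (Fin n))) ⊔ K.map π) :
    ∀ a ∈ S, (OA v S K A a ↔ OA v S (K ⊔ span ℝ {v e}) A a) ∧
      (DA (π ∘ v) S (K.map π) A a ↔ DA (π ∘ v) S ((K ⊔ span ℝ {v e}).map π) A a) := by
  intro a ha
  have hm : (K ⊔ span ℝ {v e}).map π = K.map π ⊔ span ℝ {(π ∘ v) e} := by
    rw [Submodule.map_sup, Submodule.map_span, Set.image_singleton]; rfl
  obtain ⟨g, hg, hle⟩ := Submodule.exists_le_ker_of_notMem h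
  have key : ∀ i ∈ S, g (reorient (π ∘ v) A i) = 0 := fun i hi => by
    have : g ((π ∘ v) i) = 0 :=
      hle (Submodule.mem_sup_left (Submodule.subset_span ⟨i, hi, rfl⟩))
    unfold reorient; split_ifs <;> simpa using this
  have gK : ∀ k ∈ K.map π, g k = 0 := fun k hk => hle (Submodule.mem_sup_right hk)
  rw [hm, OA_del v K e, OA_con, DA_del _ _ e, DA_con]
  refine ⟨⟨fun h => ⟨0, h⟩, ?_⟩, ⟨?_, fun h => ⟨0, h⟩⟩⟩
  · rintro ⟨t, c, h0, hK, hca, hz⟩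
    have h1 := gK _ (Submodule.mem_map_of_mem hK)
    simp only [map_add, map_sum, map_smul, smul_eq_mul] at h1
    rw [Finset.sum_eq_zero (fun i hi => by
      rw [← reorient_map_s13, key i hi, mul_zero]), zero_add] at h1
    have : t = 0 := (mul_eq_zero.1 h1).resolve_right hg
    subst this
    exact ⟨c, h0, hK, hca, hz⟩
  · rintro ⟨t, f, hK, h0, hfa, hz, he⟩
    refine ⟨f - (t / g ((π ∘ v) e)) • g, fun k hk => ?_, fun i hi => ?_, ?_, fun i hi hia => ?_, ?_⟩
    · simp [hK k hk, gK k hk]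
    · simpa [key i hi] using h0 i hi
    · simpa [key a ha] using hfa
    · simpa [key i hi] using hz i hi hia
    · simp only [LinearMap.sub_apply, LinearMap.smul_apply, smul_eq_mul, he]
      field_simp
      ring

open Classical in
/-- local factor -/
noncomputable def fac (x u y w : ℝ) (m d o : Prop) : ℝ :=
  (if ¬ m ∧ d then x else 1) * (if m ∧ d then u else 1) *
    (if ¬ m ∧ o then y else 1) * (if m ∧ o then w else 1)

noncomputable def term (v : Fin n → V) (π : V →ₗ[ℝ] W) (x u y w : ℝ) (S : Finset (Fin n))
    (K : Submodule ℝ V) (A : Finset (Fin n)) : ℝ :=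
  ∏ a ∈ S, fac x u y w (a ∈ A) (DA (π ∘ v) S (K.map π) A a) (OA v S K A a)

noncomputable def rk (v : Fin n → V) (K : Submodule ℝ V) (A : Finset (Fin n)) : ℕ :=
  Module.finrank ℝ ↥(span ℝ (v '' (A : Set (Fin n))) ⊔ K)

noncomputable def lhs (v : Fin n → V) (π : V →ₗ[ℝ] W) (X Y : ℝ) (S : Finset (Fin n))
    (K : Submodule ℝ V) : ℝ :=
  ∑ A ∈ S.powerset, (X - 1) ^ (rk (π ∘ v) (K.map π) S - rk (π ∘ v) (K.map π) A) *
    (Y - 1) ^ (A.card + Module.finrank ℝ K - rk v K A)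

lemma span_insert_sup (v : Fin n → V) (A : Finset (Fin n)) (e : Fin n) (K : Submodule ℝ V) :
    span ℝ (v '' ((insert e A : Finset (Fin n)) : Set (Fin n))) ⊔ K =
      span ℝ (v '' (A : Set (Fin n))) ⊔ (K ⊔ span ℝ {v e}) := by
  rw [Finset.coe_insert, Set.image_insert_eq, Submodule.span_insert, sup_comm (span ℝ {v e}),
    sup_assoc, sup_comm K]

lemma rk_insert (v : Fin n → V) (A : Finset (Fin n)) (e : Fin n) (K : Submodule ℝ V) :
    rk v K (insert e A) = rk v (K ⊔ span ℝ {v e}) A := by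
  unfold rk; rw [span_insert_sup]

lemma rk_mono [FiniteDimensional ℝ V] (v : Fin n → V) {A B : Finset (Fin n)} (h : A ⊆ B)
    (K : Submodule ℝ V) : rk v K A ≤ rk v K B := by
  refine Submodule.finrank_mono (sup_le_sup_right (Submodule.span_mono (Set.image_mono ?_)) _)
  exact_mod_cast h

lemma rk_le [FiniteDimensional ℝ V] (v : Fin n → V) (A : Finset (Fin n)) (K : Submodule ℝ V) :
    rk v K A ≤ A.card + Module.finrank ℝ K := by
  classical
  refine (Submodule.finrank_add_le_finrank_add_finrank _ _).trans (Nat.add_le_add_right ?_ _)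
  rw [← Finset.coe_image]
  exact (finrank_span_finset_le_card _).trans Finset.card_image_le

open Classical in
lemma finrank_sup_ite [FiniteDimensional ℝ V] (K : Submodule ℝ V) (z : V) :
    Module.finrank ℝ ↥(K ⊔ span ℝ {z}) = Module.finrank ℝ K + if z ∈ K then 0 else 1 := by
  split_ifs with h
  · rw [sup_eq_left.2 ((Submodule.span_singleton_le_iff_mem _ _).2 h), add_zero]
  · exact Submodule.finrank_sup_span_singleton h

open Classical in
lemma lhs_insert [FiniteDimensional ℝ V] [FiniteDimensional ℝ W] (v : Fin n → V) (π : V →ₗ[ℝ] W)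
    (X Y : ℝ) (S : Finset (Fin n)) (K : Submodule ℝ V) (e : Fin n) (heS : e ∉ S) :
    lhs v π X Y (insert e S) K =
      (if (π ∘ v) e ∈ span ℝ ((π ∘ v) '' (S : Set (Fin n))) ⊔ K.map π then 1 else X - 1) *
        lhs v π X Y S K +
      (if v e ∈ K then Y - 1 else 1) * lhs v π X Y S (K ⊔ span ℝ {v e}) := by
  have hm : (K ⊔ span ℝ {v e}).map π = K.map π ⊔ span ℝ {(π ∘ v) e} := by
    rw [Submodule.map_sup, Submodule.map_span, Set.image_singleton]; rfl
  unfold lhs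
  rw [Finset.sum_powerset_insert heS, Finset.mul_sum, Finset.mul_sum]
  congr 1
  · refine Finset.sum_congr rfl fun A hA => ?_
    have hA := Finset.mem_powerset.1 hA
    have h1 := rk_mono (π ∘ v) hA (K.map π)
    have h2 : rk (π ∘ v) (K.map π) (insert e S) = rk (π ∘ v) (K.map π) S +
        if (π ∘ v) e ∈ span ℝ ((π ∘ v) '' (S : Set (Fin n))) ⊔ K.map π then 0 else 1 := by
      rw [rk_insert]; unfold rk
      rw [← sup_assoc, finrank_sup_ite]
    rw [h2]
    split_ifs
    · rw [add_zero, one_mul]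
    · rw [← mul_assoc, ← pow_succ']
      congr 2
      omega
  · refine Finset.sum_congr rfl fun A hA => ?_
    have hA := Finset.mem_powerset.1 hA
    have heA : e ∉ A := fun h => heS (hA h)
    have h1 := rk_le v A (K ⊔ span ℝ {v e})
    have h2 := finrank_sup_ite K (v e)
    rw [rk_insert, rk_insert, rk_insert, hm, Finset.card_insert_of_notMem heA]
    split_ifs at h2 ⊢
    · rw [mul_left_comm, ← pow_succ']
      congr 2
      omega
    · rw [one_mul]
      congr 2
      omega

lemma fac_congr (x u y w : ℝ) {m m' d d' o o' : Prop} (hm : m ↔ m') (hd : d ↔ d') (ho : o ↔ o') :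
    fac x u y w m d o = fac x u y w m' d' o' := by
  rw [propext hm, propext hd, propext ho]

lemma main_ind [FiniteDimensional ℝ V] [FiniteDimensional ℝ W] (v : Fin n → V) (π : V →ₗ[ℝ] W)
    (x u y w : ℝ) (S : Finset (Fin n)) : ∀ K : Submodule ℝ V,
    lhs v π (x + u) (y + w) S K = ∑ A ∈ S.powerset, term v π x u y w S K A := by
  classical
  induction S using Finset.induction_on_max with
  | empty =>
    intro K
    have h : rk v K ∅ = Module.finrank ℝ K := by
      unfold rk
      rw [Finset.coe_empty, Set.image_empty, Submodule.span_empty, bot_sup_eq]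
    simp [lhs, term, h]
  | insert e S hS ih =>
    intro K
    have heS : e ∉ S := fun h => (hS e h).false
    have hne : ∀ i ∈ S, i ≠ e := fun i hi => (hS i hi).ne
    rw [lhs_insert _ _ _ _ _ _ _ heS, ih, ih, Finset.sum_powerset_insert heS,
      ← Finset.sum_add_distrib, Finset.mul_sum, Finset.mul_sum, ← Finset.sum_add_distrib]
    refine Finset.sum_congr rfl fun A hA => ?_
    have hA := Finset.mem_powerset.1 hA
    have heA : e ∉ A := fun h => heS (hA h)
    set P := fun B => ∏ a ∈ S, fac x u y w (a ∈ A)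
      (DA (π ∘ v) (insert e S) (K.map π) B a) (OA v (insert e S) K B a) with hP
    have t1 : term v π x u y w (insert e S) K A = fac x u y w False
        ((π ∘ v) e ∉ span ℝ ((π ∘ v) '' (S : Set (Fin n))) ⊔ K.map π) (v e ∈ K) * P A := by
      unfold term
      rw [Finset.prod_insert heS]
      congr 1
      exact fac_congr _ _ _ _ (by simp [heA]) (DA_top _ _ _ _ hS) (OA_top _ _ _ _ hS)
    have t2 : term v π x u y w (insert e S) K (insert e A) = fac x u y w True
        ((π ∘ v) e ∉ span ℝ ((π ∘ v) '' (S : Set (Fin n))) ⊔ K.map π) (v e ∈ K) *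
          P (insert e A) := by
      unfold term
      rw [Finset.prod_insert heS]
      congr 1
      · exact fac_congr _ _ _ _ (by simp) (DA_top _ _ _ _ hS) (OA_top _ _ _ _ hS)
      · refine Finset.prod_congr rfl fun a ha => ?_
        exact fac_congr _ _ _ _ (by simp [hne a ha]) Iff.rfl Iff.rfl
    have hdc : (P A = term v π x u y w S K A ∧
          P (insert e A) = term v π x u y w S (K ⊔ span ℝ {v e}) A) ∨
        (P (insert e A) = term v π x u y w S K A ∧
          P A = term v π x u y w S (K ⊔ span ℝ {v e}) A) := by
      rcases delcon v π K e hS hA with h | h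
      · left
        exact ⟨Finset.prod_congr rfl fun a ha => fac_congr _ _ _ _ Iff.rfl (h a ha).2.2.1 (h a ha).1,
          Finset.prod_congr rfl fun a ha =>
            fac_congr _ _ _ _ Iff.rfl (h a ha).2.2.2 (h a ha).2.1⟩
      · right
        exact ⟨Finset.prod_congr rfl fun a ha => fac_congr _ _ _ _ Iff.rfl (h a ha).2.2.1 (h a ha).1,
          Finset.prod_congr rfl fun a ha =>
            fac_congr _ _ _ _ Iff.rfl (h a ha).2.2.2 (h a ha).2.1⟩
    rw [t1, t2]
    by_cases hl : v e ∈ K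
    · have hK : K ⊔ span ℝ {v e} = K :=
        sup_eq_left.2 ((Submodule.span_singleton_le_iff_mem _ _).2 hl)
      have hc : (π ∘ v) e ∈ span ℝ ((π ∘ v) '' (S : Set (Fin n))) ⊔ K.map π :=
        Submodule.mem_sup_right (Submodule.mem_map_of_mem hl)
      rw [hK] at hdc ⊢
      have h1 : P A = term v π x u y w S K A := by rcases hdc with h | h <;> simp [h]
      have h2 : P (insert e A) = term v π x u y w S K A := by rcases hdc with h | h <;> simp [h]
      rw [h1, h2]
      simp only [hl, hc, fac]
      simp
      ring
    · by_cases hc : (π ∘ v) e ∈ span ℝ ((π ∘ v) '' (S : Set (Fin n))) ⊔ K.map π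
      · simp only [hl, hc, fac]
        rcases hdc with ⟨h1, h2⟩ | ⟨h1, h2⟩
        · rw [h1, h2]; simp
        · rw [h1, h2]; simp [add_comm]
      · have heq : term v π x u y w S K A = term v π x u y w S (K ⊔ span ℝ {v e}) A :=
          Finset.prod_congr rfl fun a ha => fac_congr _ _ _ _ Iff.rfl
            (coloop_eq v π K e hc a ha).2 (coloop_eq v π K e hc a ha).1
        rw [← heq] at hdc ⊢
        have h1 : P A = term v π x u y w S K A := by rcases hdc with h | h <;> simp [h]
        have h2 : P (insert e A) = term v π x u y w S K A := by rcases hdc with h | h <;> simp [h]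
        rw [h1, h2]
        simp only [hl, hc, fac]
        simp
        ring

lemma OA_univ (v : Fin n → V) (A : Finset (Fin n)) (a : Fin n) :
    OA v Finset.univ ⊥ A a ↔ OActive (reorient v A) a := by
  simp [OA, OActive]

lemma DA_univ (v : Fin n → V) (A : Finset (Fin n)) (a : Fin n) :
    DA v Finset.univ ⊥ A a ↔ ODualActive (reorient v A) a := by
  simp [DA, ODualActive]

open Classical in
lemma prod_ncard (p : Fin n → Prop) (z : ℝ) :
    ∏ a, (if p a then z else 1) = z ^ {a : Fin n | p a}.ncard := by
  rw [Finset.prod_ite, Finset.prod_const, Finset.prod_const_one, mul_one,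
    Set.ncard_eq_toFinset_card', Set.toFinset_ofPred]

lemma rk_bot (v : Fin n → V) (A : Finset (Fin n)) : rk v ⊥ A = vrank v ↑A := by
  unfold rk vrank; rw [sup_bot_eq]

lemma term_univ (v : Fin n → V) (π : V →ₗ[ℝ] W) (x u y w : ℝ) (A : Finset (Fin n)) :
    term v π x u y w Finset.univ ⊥ A =
      x ^ thetaStar (π ∘ v) A * u ^ thetaStarBar (π ∘ v) A * y ^ theta v A * w ^ thetaBar v A := by
  have : term v π x u y w Finset.univ ⊥ A = ∏ a, fac x u y w (a ∈ A)
      (ODualActive (reorient (π ∘ v) A) a) (OActive (reorient v A) a) := by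
    refine Finset.prod_congr rfl fun a _ => fac_congr _ _ _ _ Iff.rfl ?_ (OA_univ _ _ _)
    rw [Submodule.map_bot, DA_univ]
  rw [this]
  simp only [fac, Finset.prod_mul_distrib]
  unfold thetaStar thetaStarBar theta thetaBar
  rw [← prod_ncard, ← prod_ncard, ← prod_ncard, ← prod_ncard]
  congr!

end helpers

/-- 4-variable expansion for oriented matroid perspectives (realizable case):
`t(M,M'; x+u, y+w, 1) = ∑_A x^θ*_{M'}(A) · u^θ̄*_{M'}(A) · y^θ_M(A) · w^θ̄_M(A)`. -/
theorem statement13 {n : ℕ} {V W : Type*} [AddCommGroup V] [Module ℝ V] [FiniteDimensional ℝ V]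
    [AddCommGroup W] [Module ℝ W] [FiniteDimensional ℝ W]
    (v : Fin n → V) (π : V →ₗ[ℝ] W) (x u y w : ℝ) :
    tuttePerspV v (π ∘ v) (x + u) (y + w) =
      ∑ A : Finset (Fin n),
        x ^ thetaStar (π ∘ v) A * u ^ thetaStarBar (π ∘ v) A *
          y ^ theta v A * w ^ thetaBar v A := by
  have h := main_ind v π x u y w Finset.univ ⊥
  have h1 : lhs v π (x + u) (y + w) Finset.univ ⊥ = tuttePerspV v (π ∘ v) (x + u) (y + w) := by
    unfold lhs tuttePerspV
    rw [Submodule.map_bot, Finset.powerset_univ]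
    simp only [rk_bot, finrank_bot, add_zero]
    rw [Finset.coe_univ]
  rw [← h1, h, Finset.powerset_univ]
  exact Finset.sum_congr rfl fun A _ => term_univ v π x u y w A
end

section
/- (Alternating-sum expression for t(M,M';0,0,1), realizable case.) For every vector configuration v : Fin n → V and every linear map π : V →ₗ[ℝ] W with v' = π ∘ v: t(M,M'; 0, 0, 1) = ∑_{A ⊆ Fin n} (-1)^{θ*_{M'}(A) + θ_M(A)}. -/
open Set Submodule

namespace Persp

/-- Non-dependent `snoc`. -/
def sn {α : Type*} {n : ℕ} (x : Fin n → α) (t : α) : Fin (n + 1) → α :=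
  Fin.snoc (α := fun _ => α) x t

@[simp] lemma sn_cs {α : Type*} {n : ℕ} (x : Fin n → α) (t : α) (i : Fin n) :
    sn x t i.castSucc = x i := by simp [sn]

@[simp] lemma sn_last {α : Type*} {n : ℕ} (x : Fin n → α) (t : α) :
    sn x t (Fin.last n) = t := by simp [sn]

lemma sn_eta {α : Type*} {n : ℕ} (c : Fin (n + 1) → α) :
    sn (fun i => c i.castSucc) (c (Fin.last n)) = c := by
  ext i
  refine Fin.lastCases ?_ (fun j => ?_) i <;> simp

lemma sn_surj {α : Type*} {n : ℕ} (c : Fin (n + 1) → α) : ∃ x t, c = sn x t :=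
  ⟨_, _, (sn_eta c).symm⟩

lemma sn_add {n : ℕ} (x y : Fin n → ℝ) (t u : ℝ) : sn x t + sn y u = sn (x + y) (t + u) := by
  ext i
  refine Fin.lastCases ?_ (fun j => ?_) i <;> simp

lemma sn_smul {n : ℕ} (x : Fin n → ℝ) (t u : ℝ) : u • sn x t = sn (u • x) (u * t) := by
  ext i
  refine Fin.lastCases ?_ (fun j => ?_) i <;> simp

lemma sn_inj {n : ℕ} {x y : Fin n → ℝ} {t u : ℝ} (h : sn x t = sn y u) : x = y ∧ t = u := by
  constructor
  · ext i
    simpa using congrFun h i.castSucc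
  · simpa using congrFun h (Fin.last n)

/-- Sign of a boolean. -/
def sg (b : Bool) : ℝ := if b then -1 else 1

@[simp] lemma sg_true : sg true = -1 := by simp [sg]
@[simp] lemma sg_false : sg false = 1 := by simp [sg]
lemma sg_not (b : Bool) : sg (!b) = - sg b := by cases b <;> simp
lemma sg_mul_self (b : Bool) : sg b * sg b = 1 := by cases b <;> simp

/-- Activity for a subspace of `ℝ^n`. -/
def Act {n : ℕ} (L : Submodule ℝ (Fin n → ℝ)) (s : Fin n → Bool) (a : Fin n) : Prop :=
  ∃ c ∈ L, (∀ i, 0 ≤ sg (s i) * c i) ∧ 0 < sg (s a) * c a ∧ ∀ i < a, c i = 0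

open Classical in
/-- Number of active elements with sign `false`. -/
noncomputable def th {n : ℕ} (L : Submodule ℝ (Fin n → ℝ)) (s : Fin n → Bool) : ℕ :=
  ∑ a, if s a = false ∧ Act L s a then 1 else 0

/-- Vectors supported on `s = true`. -/
def Z {n : ℕ} (s : Fin n → Bool) : Submodule ℝ (Fin n → ℝ) where
  carrier := {c | ∀ i, s i = false → c i = 0}
  zero_mem' := by intro i _; rfl
  add_mem' := by
    intro a b ha hb i hi
    simp [ha i hi, hb i hi]
  smul_mem' := by
    intro r a ha i hi
    simp [ha i hi]

lemma mem_Z {n : ℕ} {s : Fin n → Bool} {c : Fin n → ℝ} :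
    c ∈ Z s ↔ ∀ i, s i = false → c i = 0 := Iff.rfl

/-- Dimension of the subspace of vectors supported on `s`. -/
noncomputable def N {n : ℕ} (L : Submodule ℝ (Fin n → ℝ)) (s : Fin n → Bool) : ℕ :=
  Module.finrank ℝ ↥(L ⊓ Z s)

/-- Forget the last coordinate. -/
def p (n : ℕ) : (Fin (n + 1) → ℝ) →ₗ[ℝ] (Fin n → ℝ) := LinearMap.funLeft ℝ ℝ Fin.castSucc

@[simp] lemma p_sn {n : ℕ} (x : Fin n → ℝ) (t : ℝ) : p n (sn x t) = x := by
  ext i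
  simp [p, LinearMap.funLeft]

/-- Contraction. -/
def con {n : ℕ} (L : Submodule ℝ (Fin (n + 1) → ℝ)) : Submodule ℝ (Fin n → ℝ) := L.map (p n)

/-- Deletion. -/
def del {n : ℕ} (L : Submodule ℝ (Fin (n + 1) → ℝ)) : Submodule ℝ (Fin n → ℝ) :=
  (L ⊓ LinearMap.ker (LinearMap.proj (R := ℝ) (φ := fun _ => ℝ) (Fin.last n))).map (p n)

lemma mem_con {n : ℕ} {L : Submodule ℝ (Fin (n + 1) → ℝ)} {x : Fin n → ℝ} :
    x ∈ con L ↔ ∃ t, sn x t ∈ L := by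
  unfold con
  rw [Submodule.mem_map]
  constructor
  · rintro ⟨c, hc, rfl⟩
    obtain ⟨y, t, rfl⟩ := sn_surj c
    exact ⟨t, by simpa using hc⟩
  · rintro ⟨t, h⟩
    exact ⟨_, h, by simp⟩

lemma mem_del {n : ℕ} {L : Submodule ℝ (Fin (n + 1) → ℝ)} {x : Fin n → ℝ} :
    x ∈ del L ↔ sn x 0 ∈ L := by
  unfold del
  rw [Submodule.mem_map]
  constructor
  · rintro ⟨c, ⟨hc, h0⟩, rfl⟩
    obtain ⟨y, t, rfl⟩ := sn_surj c
    have : t = 0 := by simpa using h0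
    subst this
    simpa using hc
  · intro h
    exact ⟨_, ⟨h, by simp⟩, by simp⟩

lemma finrank_map_add {V W : Type*} [AddCommGroup V] [Module ℝ V] [FiniteDimensional ℝ V]
    [AddCommGroup W] [Module ℝ W] (f : V →ₗ[ℝ] W) (q : Submodule ℝ V) :
    Module.finrank ℝ ↥(q.map f) + Module.finrank ℝ ↥(q ⊓ LinearMap.ker f)
      = Module.finrank ℝ ↥q := by
  have h := LinearMap.finrank_range_add_finrank_ker (f.domRestrict q)
  have h1 : LinearMap.range (f.domRestrict q) = q.map f := by
    rw [LinearMap.domRestrict, LinearMap.range_comp, Submodule.range_subtype]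
  have h2 : Module.finrank ℝ ↥(LinearMap.ker (f.domRestrict q))
      = Module.finrank ℝ ↥(q ⊓ LinearMap.ker f) := by
    rw [← Submodule.finrank_map_subtype_eq, LinearMap.domRestrict, LinearMap.ker_comp,
      Submodule.map_comap_subtype]
  rw [h1, h2] at h
  exact h

lemma sn_mem_Z {n : ℕ} {s : Fin n → Bool} {b : Bool} {x : Fin n → ℝ} {t : ℝ} :
    sn x t ∈ Z (sn s b) ↔ x ∈ Z s ∧ (b = false → t = 0) := by
  rw [mem_Z, Fin.forall_fin_succ']
  simp [mem_Z]

lemma N_false {n : ℕ} (L : Submodule ℝ (Fin (n + 1) → ℝ)) (s : Fin n → Bool) :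
    N L (sn s false) = N (del L) s := by
  unfold N
  rw [← finrank_map_add (p n) (L ⊓ Z (sn s false))]
  have h1 : (L ⊓ Z (sn s false)).map (p n) = del L ⊓ Z s := by
    ext x
    rw [Submodule.mem_map, Submodule.mem_inf, mem_del]
    constructor
    · rintro ⟨c, ⟨hc, h0⟩, rfl⟩
      obtain ⟨y, t, rfl⟩ := sn_surj c
      obtain ⟨h0, h1⟩ := sn_mem_Z.1 h0
      have := h1 rfl
      subst this
      simp_all
    · rintro ⟨h, h'⟩
      exact ⟨_, ⟨h, sn_mem_Z.2 ⟨h', fun _ => rfl⟩⟩, by simp⟩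
  have h2 : L ⊓ Z (sn s false) ⊓ LinearMap.ker (p n) = ⊥ := by
    rw [eq_bot_iff]
    rintro c ⟨⟨hc, h0⟩, h1⟩
    obtain ⟨y, t, rfl⟩ := sn_surj c
    obtain ⟨h0, h2⟩ := sn_mem_Z.1 h0
    have h3 : y = 0 := by simpa using h1
    rw [h2 rfl, h3, Submodule.mem_bot]
    ext i
    refine Fin.lastCases ?_ (fun j => ?_) i <;> simp
  rw [h1, h2]
  simp

lemma N_true {n : ℕ} (L : Submodule ℝ (Fin (n + 1) → ℝ)) (s : Fin n → Bool) :
    N L (sn s true) = N (con L) s + Module.finrank ℝ ↥(L ⊓ LinearMap.ker (p n)) := by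
  unfold N
  rw [← finrank_map_add (p n) (L ⊓ Z (sn s true))]
  have h1 : (L ⊓ Z (sn s true)).map (p n) = con L ⊓ Z s := by
    ext x
    rw [Submodule.mem_map, Submodule.mem_inf, mem_con]
    constructor
    · rintro ⟨c, ⟨hc, h0⟩, rfl⟩
      obtain ⟨y, t, rfl⟩ := sn_surj c
      obtain ⟨h0, h1⟩ := sn_mem_Z.1 h0
      simp only [p_sn]
      exact ⟨⟨t, hc⟩, h0⟩
    · rintro ⟨⟨t, h⟩, h'⟩
      exact ⟨_, ⟨h, sn_mem_Z.2 ⟨h', by simp⟩⟩, by simp⟩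
  have h2 : L ⊓ Z (sn s true) ⊓ LinearMap.ker (p n) = L ⊓ LinearMap.ker (p n) := by
    ext c
    obtain ⟨y, t, rfl⟩ := sn_surj c
    simp only [Submodule.mem_inf, sn_mem_Z, LinearMap.mem_ker, p_sn]
    constructor
    · rintro ⟨⟨h, _⟩, h'⟩
      exact ⟨h, h'⟩
    · rintro ⟨h, rfl⟩
      exact ⟨⟨h, Submodule.zero_mem _, by simp⟩, rfl⟩
  rw [h1, h2]

lemma finrank_ker_of_mem {n : ℕ} {L : Submodule ℝ (Fin (n + 1) → ℝ)}
    (h : sn (0 : Fin n → ℝ) 1 ∈ L) : Module.finrank ℝ ↥(L ⊓ LinearMap.ker (p n)) = 1 := by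
  have : L ⊓ LinearMap.ker (p n) = Submodule.span ℝ {sn (0 : Fin n → ℝ) 1} := by
    ext c
    obtain ⟨y, t, rfl⟩ := sn_surj c
    simp only [Submodule.mem_inf, LinearMap.mem_ker, p_sn, Submodule.mem_span_singleton, sn_smul]
    constructor
    · rintro ⟨_, rfl⟩
      exact ⟨t, by simp⟩
    · rintro ⟨a, ha⟩
      obtain ⟨h1, h2⟩ := sn_inj ha
      refine ⟨?_, by simp [← h1]⟩
      rw [← ha, ← sn_smul]
      exact L.smul_mem _ h
  rw [this, finrank_span_singleton]
  intro h0
  simpa using congrFun h0 (Fin.last n)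

lemma mem_of_zero {n : ℕ} {L : Submodule ℝ (Fin (n + 1) → ℝ)} {t : ℝ} (ht : t ≠ 0)
    (h : sn (0 : Fin n → ℝ) t ∈ L) : sn (0 : Fin n → ℝ) 1 ∈ L := by
  have := L.smul_mem t⁻¹ h
  rw [sn_smul, inv_mul_cancel₀ ht] at this
  simpa using this

lemma finrank_ker_of_not_mem {n : ℕ} {L : Submodule ℝ (Fin (n + 1) → ℝ)}
    (h : sn (0 : Fin n → ℝ) 1 ∉ L) : Module.finrank ℝ ↥(L ⊓ LinearMap.ker (p n)) = 0 := by
  have : L ⊓ LinearMap.ker (p n) = ⊥ := by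
    rw [eq_bot_iff]
    rintro c ⟨hc, h1⟩
    obtain ⟨y, t, rfl⟩ := sn_surj c
    have h3 : y = 0 := by simpa using h1
    subst h3
    have ht : t = 0 := by
      by_contra ht
      exact h (mem_of_zero ht hc)
    subst ht
    rw [Submodule.mem_bot]
    ext i
    refine Fin.lastCases ?_ (fun j => ?_) i <;> simp
  rw [this]
  simp

lemma act_cs {n : ℕ} {L : Submodule ℝ (Fin (n + 1) → ℝ)} {s : Fin n → Bool} {b : Bool}
    {a : Fin n} : Act L (sn s b) a.castSucc ↔ ∃ x t, sn x t ∈ L ∧ (∀ i, 0 ≤ sg (s i) * x i) ∧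
      0 ≤ sg b * t ∧ 0 < sg (s a) * x a ∧ ∀ i < a, x i = 0 := by
  constructor
  · rintro ⟨c, hc, h1, h2, h3⟩
    obtain ⟨y, t, rfl⟩ := sn_surj c
    refine ⟨y, t, hc, fun i => by simpa using h1 i.castSucc, by simpa using h1 (Fin.last n),
      by simpa using h2, fun i hi => by simpa using h3 i.castSucc (by simpa using hi)⟩
  · rintro ⟨x, t, h, h1, h2, h3, h4⟩
    refine ⟨_, h, ?_, by simpa using h3, ?_⟩
    · rw [Fin.forall_fin_succ']
      simpa using ⟨h1, h2⟩
    · intro i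
      refine Fin.lastCases ?_ (fun j => ?_) i
      · intro hi
        exact absurd hi (not_lt.2 (Fin.le_last _))
      · intro hj
        simpa using h4 j (by simpa using hj)

lemma act_last {n : ℕ} {L : Submodule ℝ (Fin (n + 1) → ℝ)} {s : Fin n → Bool} {b : Bool} :
    Act L (sn s b) (Fin.last n) ↔ sn (0 : Fin n → ℝ) 1 ∈ L := by
  constructor
  · rintro ⟨c, hc, h1, h2, h3⟩
    obtain ⟨y, t, rfl⟩ := sn_surj c
    have hy : y = 0 := by
      ext i
      simpa using h3 i.castSucc (Fin.castSucc_lt_last i)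
    subst hy
    refine mem_of_zero (t := t) ?_ hc
    rintro rfl
    simp at h2
  · intro h
    refine ⟨_, L.smul_mem (sg b) h, ?_, ?_, ?_⟩
    · rw [Fin.forall_fin_succ']
      simp [sg_mul_self]
    · simp [sg_mul_self]
    · intro i
      refine Fin.lastCases ?_ (fun j => ?_) i
      · intro hi
        exact absurd hi (lt_irrefl _)
      · simp

open Classical in
lemma th_sn {n : ℕ} (L : Submodule ℝ (Fin (n + 1) → ℝ)) (M : Submodule ℝ (Fin n → ℝ))
    (s : Fin n → Bool) (b : Bool) (h : ∀ a : Fin n, Act L (sn s b) a.castSucc ↔ Act M s a) :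
    th L (sn s b) = th M s + if b = false ∧ sn (0 : Fin n → ℝ) 1 ∈ L then 1 else 0 := by
  unfold th
  rw [Fin.sum_univ_castSucc]
  simp only [sn_cs, sn_last, h, act_last]

/-- Vector witnessing a difference with the deletion. -/
def Q {n : ℕ} (L : Submodule ℝ (Fin (n + 1) → ℝ)) (s : Fin n → Bool) (b : Bool) : Prop :=
  ∃ a : Fin n, Act L (sn s b) a.castSucc ∧ ¬ Act (del L) s a

lemma act_of_del {n : ℕ} {L : Submodule ℝ (Fin (n + 1) → ℝ)} {s : Fin n → Bool} (b : Bool)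
    {a : Fin n} (h : Act (del L) s a) : Act L (sn s b) a.castSucc := by
  obtain ⟨x, hx, h1, h2, h3⟩ := h
  exact act_cs.2 ⟨x, 0, mem_del.1 hx, h1, by simp, h2, h3⟩

lemma con_of_act {n : ℕ} {L : Submodule ℝ (Fin (n + 1) → ℝ)} {s : Fin n → Bool} {b : Bool}
    {a : Fin n} (h : Act L (sn s b) a.castSucc) : Act (con L) s a := by
  obtain ⟨x, t, hx, h1, _, h2, h3⟩ := act_cs.1 h
  exact ⟨x, mem_con.2 ⟨t, hx⟩, h1, h2, h3⟩

lemma act_of_con {n : ℕ} {L : Submodule ℝ (Fin (n + 1) → ℝ)} {s : Fin n → Bool} (b : Bool)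
    {a : Fin n} (h : Act (con L) s a) :
    Act L (sn s b) a.castSucc ∨ Act L (sn s (!b)) a.castSucc := by
  obtain ⟨x, hx, h1, h2, h3⟩ := h
  obtain ⟨t, ht⟩ := mem_con.1 hx
  rcases le_total 0 (sg b * t) with h | h
  · exact Or.inl (act_cs.2 ⟨x, t, ht, h1, h, h2, h3⟩)
  · exact Or.inr (act_cs.2 ⟨x, t, ht, h1, by rw [sg_not]; linarith, h2, h3⟩)

lemma iff_del {n : ℕ} {L : Submodule ℝ (Fin (n + 1) → ℝ)} {s : Fin n → Bool} {b : Bool}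
    (h : ¬ Q L s b) (a : Fin n) : Act L (sn s b) a.castSucc ↔ Act (del L) s a := by
  refine ⟨fun h1 => ?_, act_of_del b⟩
  by_contra h2
  exact h ⟨a, h1, h2⟩

lemma iff_con {n : ℕ} {L : Submodule ℝ (Fin (n + 1) → ℝ)} {s : Fin n → Bool} {b : Bool}
    (h : ¬ Q L s b) (a : Fin n) : Act L (sn s (!b)) a.castSucc ↔ Act (con L) s a := by
  refine ⟨con_of_act, fun h1 => ?_⟩
  rcases act_of_con b h1 with h2 | h2
  · exact act_of_del _ ((iff_del h a).1 h2)
  · exact h2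

lemma Q_wit {n : ℕ} {L : Submodule ℝ (Fin (n + 1) → ℝ)} {s : Fin n → Bool} {b : Bool}
    (h : Q L s b) : ∃ a x t, sn x t ∈ L ∧ (∀ i, 0 ≤ sg (s i) * x i) ∧
      0 < sg b * t ∧ 0 < sg (s a) * x a ∧ (∀ i < a, x i = 0) ∧ ¬ Act (del L) s a := by
  obtain ⟨a, h, hd⟩ := h
  obtain ⟨x, t, hx, h1, h0, h2, h3⟩ := act_cs.1 h
  refine ⟨a, x, t, hx, h1, lt_of_le_of_ne h0 ?_, h2, h3, hd⟩
  intro ht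
  have : t = 0 := by cases b <;> simpa using ht.symm
  subst this
  exact hd ⟨x, mem_del.2 hx, h1, h2, h3⟩

lemma not_Q_both_aux {n : ℕ} {L : Submodule ℝ (Fin (n + 1) → ℝ)} {s : Fin n → Bool}
    {a a' : Fin n} (haa : a ≤ a') {x y : Fin n → ℝ} {t u : ℝ} (hx : sn x t ∈ L)
    (hy : sn y u ∈ L) (hx1 : ∀ i, 0 ≤ sg (s i) * x i) (hy1 : ∀ i, 0 ≤ sg (s i) * y i)
    (hxa : 0 < sg (s a) * x a) (hx0 : ∀ i < a, x i = 0) (hy0 : ∀ i < a', y i = 0)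
    (r q : ℝ) (hr : 0 < r) (hq : 0 < q) (hrq : r * t + q * u = 0) : Act (del L) s a := by
  refine ⟨r • x + q • y, ?_, ?_, ?_, ?_⟩
  · have := L.add_mem (L.smul_mem r hx) (L.smul_mem q hy)
    rw [sn_smul, sn_smul, sn_add, hrq] at this
    exact mem_del.2 this
  · intro i
    have h1 := mul_nonneg hr.le (hx1 i)
    have h2 := mul_nonneg hq.le (hy1 i)
    simp only [Pi.add_apply, Pi.smul_apply, smul_eq_mul]
    nlinarith
  · have h1 := mul_pos hr hxa
    have h2 := mul_nonneg hq.le (hy1 a)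
    simp only [Pi.add_apply, Pi.smul_apply, smul_eq_mul]
    nlinarith
  · intro i hi
    simp [hx0 i hi, hy0 i (hi.trans_le haa)]

lemma not_Q_both {n : ℕ} {L : Submodule ℝ (Fin (n + 1) → ℝ)} {s : Fin n → Bool}
    (h1 : Q L s true) (h2 : Q L s false) : False := by
  obtain ⟨a, x, t, hx, hx1, ht, hxa, hx0, hxd⟩ := Q_wit h1
  obtain ⟨a', y, u, hy, hy1, hu, hya, hy0, hyd⟩ := Q_wit h2
  simp only [sg_true, sg_false] at ht hu
  rcases le_total a a' with h | h
  · exact hxd (not_Q_both_aux h hx hy hx1 hy1 hxa hx0 hy0 u (-t) (by linarith) (by linarith)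
      (by ring))
  · exact hyd (not_Q_both_aux h hy hx hy1 hx1 hya hy0 hx0 (-t) u (by linarith) (by linarith)
      (by ring))

/-- Orthogonality. -/
def Orth {n : ℕ} (K L : Submodule ℝ (Fin n → ℝ)) : Prop :=
  ∀ k ∈ K, ∀ l ∈ L, ∑ i, k i * l i = 0

lemma Orth.symm {n : ℕ} {K L : Submodule ℝ (Fin n → ℝ)} (h : Orth K L) : Orth L K := by
  intro k hk l hl
  simpa [mul_comm] using h l hl k hk

lemma Orth.con_del {n : ℕ} {K L : Submodule ℝ (Fin (n + 1) → ℝ)} (h : Orth K L) :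
    Orth (con K) (del L) := by
  intro k hk l hl
  obtain ⟨t, ht⟩ := mem_con.1 hk
  have := h _ ht _ (mem_del.1 hl)
  rw [Fin.sum_univ_castSucc] at this
  simpa using this

lemma Orth.del_con {n : ℕ} {K L : Submodule ℝ (Fin (n + 1) → ℝ)} (h : Orth K L) :
    Orth (del K) (con L) := h.symm.con_del.symm

lemma not_Q_orth {n : ℕ} {K L : Submodule ℝ (Fin (n + 1) → ℝ)} (h : Orth K L)
    {s : Fin n → Bool} {b : Bool} (h1 : Q K s b) (h2 : Q L s b) : False := by
  obtain ⟨a, x, t, hx, hx1, ht, -⟩ := Q_wit h1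
  obtain ⟨a', y, u, hy, hy1, hu, -⟩ := Q_wit h2
  have := h _ hx _ hy
  rw [Fin.sum_univ_castSucc] at this
  simp only [sn_cs, sn_last] at this
  have h3 : 0 ≤ ∑ i, x i * y i := by
    refine Finset.sum_nonneg fun i _ => ?_
    have := mul_nonneg (hx1 i) (hy1 i)
    have h4 := sg_mul_self (s i)
    calc 0 ≤ _ := this
      _ = (sg (s i) * sg (s i)) * (x i * y i) := by ring
      _ = _ := by rw [h4, one_mul]
  have h4 : 0 < t * u := by
    calc 0 < _ := mul_pos ht hu
      _ = (sg b * sg b) * (t * u) := by ring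
      _ = _ := by rw [sg_mul_self, one_mul]
  linarith

lemma exists_b {n : ℕ} {K L : Submodule ℝ (Fin (n + 1) → ℝ)} (h : Orth K L)
    (s : Fin n → Bool) : ∃ b, ¬ Q L s b ∧ ¬ Q K s (!b) := by
  by_cases h1 : Q L s true
  · exact ⟨false, fun h2 => not_Q_both h1 h2, fun h2 => not_Q_orth h h2 h1⟩
  · by_cases h3 : Q L s false
    · exact ⟨true, h1, fun h2 => not_Q_orth h h2 h3⟩
    · by_cases h4 : Q K s true
      · exact ⟨true, h1, fun h2 => not_Q_both h4 h2⟩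
      · exact ⟨false, h3, h4⟩

lemma sum_sn {n : ℕ} (F : (Fin (n + 1) → Bool) → ℝ) :
    ∑ s, F s = ∑ s : Fin n → Bool, (F (sn s false) + F (sn s true)) := by
  rw [← (Fin.snocEquiv (fun _ => Bool)).sum_comp, Fintype.sum_prod_type, Fintype.sum_bool,
    ← Finset.sum_add_distrib]
  refine Finset.sum_congr rfl fun s _ => ?_
  rw [add_comm]
  rfl

/-- Left-hand side. -/
noncomputable def lhs {n : ℕ} (K L : Submodule ℝ (Fin n → ℝ)) : ℝ :=
  ∑ s : Fin n → Bool, (-1 : ℝ) ^ (N K (fun i => !(s i)) + N L s)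

/-- Right-hand side. -/
noncomputable def rhs {n : ℕ} (K L : Submodule ℝ (Fin n → ℝ)) : ℝ :=
  ∑ s : Fin n → Bool, (-1 : ℝ) ^ (th K s + th L s)

lemma rhs_symm {n : ℕ} (K L : Submodule ℝ (Fin n → ℝ)) : rhs K L = rhs L K := by
  unfold rhs
  simp only [add_comm]

lemma lhs_symm {n : ℕ} (K L : Submodule ℝ (Fin n → ℝ)) : lhs K L = lhs L K := by
  unfold lhs
  let e : (Fin n → Bool) ≃ (Fin n → Bool) :=
    ⟨fun s i => !(s i), fun s i => !(s i), fun s => by simp, fun s => by simp⟩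
  rw [← e.sum_comp]
  refine Finset.sum_congr rfl fun s _ => ?_
  simp [e, add_comm]

lemma not_sn {n : ℕ} (s : Fin n → Bool) (b : Bool) :
    (fun i => !(sn s b i)) = sn (fun i => !(s i)) (!b) := by
  ext i
  refine Fin.lastCases ?_ (fun j => ?_) i <;> simp

lemma pow_parity (a b : ℕ) : (-1 : ℝ) ^ (a + 1 + b) + (-1) ^ (a + b) = 0 := by
  ring

lemma last_zero {n : ℕ} {K L : Submodule ℝ (Fin (n + 1) → ℝ)} (h : Orth K L)
    (he : sn (0 : Fin n → ℝ) 1 ∈ L) {x : Fin n → ℝ} {t : ℝ} (hx : sn x t ∈ K) : t = 0 := by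
  have := h _ hx _ he
  rw [Fin.sum_univ_castSucc] at this
  simpa using this

lemma sn_shift {n : ℕ} {L : Submodule ℝ (Fin (n + 1) → ℝ)}
    (he : sn (0 : Fin n → ℝ) 1 ∈ L) {x : Fin n → ℝ} {t : ℝ} (hx : sn x t ∈ L) (u : ℝ) :
    sn x u ∈ L := by
  have := L.add_mem hx (L.smul_mem (u - t) he)
  rw [sn_smul, sn_add] at this
  simpa using this

lemma del_eq_con {n : ℕ} {L : Submodule ℝ (Fin (n + 1) → ℝ)}
    (he : sn (0 : Fin n → ℝ) 1 ∈ L) : del L = con L := by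
  ext x
  rw [mem_del, mem_con]
  exact ⟨fun h => ⟨_, h⟩, fun ⟨t, h⟩ => sn_shift he h 0⟩

lemma del_eq_con' {n : ℕ} {K L : Submodule ℝ (Fin (n + 1) → ℝ)} (h : Orth K L)
    (he : sn (0 : Fin n → ℝ) 1 ∈ L) : del K = con K := by
  ext x
  rw [mem_del, mem_con]
  refine ⟨fun h => ⟨_, h⟩, fun ⟨t, hx⟩ => ?_⟩
  have := last_zero h he hx
  rwa [this] at hx

lemma not_mem_K {n : ℕ} {K L : Submodule ℝ (Fin (n + 1) → ℝ)} (h : Orth K L)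
    (he : sn (0 : Fin n → ℝ) 1 ∈ L) : sn (0 : Fin n → ℝ) 1 ∉ K := by
  intro h1
  exact one_ne_zero (last_zero h he h1)

lemma act_of_eq {n : ℕ} {L : Submodule ℝ (Fin (n + 1) → ℝ)} (hL : del L = con L)
    (s : Fin n → Bool) (b : Bool) (a : Fin n) :
    Act L (sn s b) a.castSucc ↔ Act (con L) s a :=
  ⟨con_of_act, fun h => act_of_del b (by rwa [hL])⟩

lemma lhs_loop {n : ℕ} {K L : Submodule ℝ (Fin (n + 1) → ℝ)} (h : Orth K L)
    (he : sn (0 : Fin n → ℝ) 1 ∈ L) : lhs K L = 0 := by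
  unfold lhs
  rw [sum_sn]
  refine Finset.sum_eq_zero fun s _ => ?_
  simp only [not_sn, Bool.not_false, Bool.not_true, N_true, N_false, finrank_ker_of_mem he,
    finrank_ker_of_not_mem (not_mem_K h he), del_eq_con he, del_eq_con' h he]
  ring

lemma rhs_loop {n : ℕ} {K L : Submodule ℝ (Fin (n + 1) → ℝ)} (h : Orth K L)
    (he : sn (0 : Fin n → ℝ) 1 ∈ L) : rhs K L = 0 := by
  unfold rhs
  rw [sum_sn]
  refine Finset.sum_eq_zero fun s _ => ?_
  rw [th_sn _ _ _ _ (act_of_eq (del_eq_con he) s true),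
    th_sn _ _ _ _ (act_of_eq (del_eq_con he) s false),
    th_sn _ _ _ _ (act_of_eq (del_eq_con' h he) s true),
    th_sn _ _ _ _ (act_of_eq (del_eq_con' h he) s false)]
  simp only [he, not_mem_K h he]
  simp
  ring

lemma lhs_gen {n : ℕ} {K L : Submodule ℝ (Fin (n + 1) → ℝ)}
    (hL : sn (0 : Fin n → ℝ) 1 ∉ L) (hK : sn (0 : Fin n → ℝ) 1 ∉ K) :
    lhs K L = lhs (con K) (del L) + lhs (del K) (con L) := by
  unfold lhs
  rw [sum_sn, ← Finset.sum_add_distrib]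
  refine Finset.sum_congr rfl fun s _ => ?_
  simp only [not_sn, Bool.not_false, Bool.not_true, N_true, N_false,
    finrank_ker_of_not_mem hL, finrank_ker_of_not_mem hK, add_zero]

lemma rhs_gen {n : ℕ} {K L : Submodule ℝ (Fin (n + 1) → ℝ)} (h : Orth K L)
    (hL : sn (0 : Fin n → ℝ) 1 ∉ L) (hK : sn (0 : Fin n → ℝ) 1 ∉ K) :
    rhs K L = rhs (con K) (del L) + rhs (del K) (con L) := by
  unfold rhs
  rw [sum_sn, ← Finset.sum_add_distrib]
  refine Finset.sum_congr rfl fun s _ => ?_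
  obtain ⟨b, h1, h2⟩ := exists_b h s
  have e1 := th_sn _ _ _ _ (iff_del h1)
  have e2 := th_sn _ _ _ _ (iff_con h1)
  have e3 := th_sn _ _ _ _ (iff_del h2)
  have e4 := th_sn _ _ _ _ (iff_con h2)
  simp only [hL, hK, and_false, if_false, add_zero, Bool.not_not] at e1 e2 e3 e4
  cases b
  · simp only [Bool.not_false] at e1 e2 e3 e4
    rw [e1, e2, e3, e4]
  · simp only [Bool.not_true] at e1 e2 e3 e4
    rw [e1, e2, e3, e4, add_comm]

theorem main : ∀ {n : ℕ} (K L : Submodule ℝ (Fin n → ℝ)), Orth K L → lhs K L = rhs K L := by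
  intro n
  induction n with
  | zero =>
    intro K L _
    have : ∀ (M : Submodule ℝ (Fin 0 → ℝ)) s, N M s = 0 := by
      intro M s
      unfold N
      exact Module.finrank_zero_of_subsingleton
    simp [lhs, rhs, this, th]
  | succ n ih =>
    intro K L h
    by_cases hL : sn (0 : Fin n → ℝ) 1 ∈ L
    · rw [lhs_loop h hL, rhs_loop h hL]
    · by_cases hK : sn (0 : Fin n → ℝ) 1 ∈ K
      · rw [lhs_symm, rhs_symm, lhs_loop h.symm hK, rhs_loop h.symm hK]
      · rw [lhs_gen hL hK, rhs_gen h hL hK, ih _ _ h.con_del, ih _ _ h.del_con]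

end Persp

namespace Persp

/-- Indicator of a finset. -/
def chi {n : ℕ} (A : Finset (Fin n)) : Fin n → Bool := fun i => decide (i ∈ A)

/-- Finsets as boolean functions. -/
def chiEquiv (n : ℕ) : Finset (Fin n) ≃ (Fin n → Bool) where
  toFun := chi
  invFun s := Finset.univ.filter (fun i => s i = true)
  left_inv A := by ext i; simp [chi]
  right_inv s := by ext i; simp [chi]

section
variable {n : ℕ} {V : Type*} [AddCommGroup V] [Module ℝ V]

lemma reorient_eq (v : Fin n → V) (A : Finset (Fin n)) (i : Fin n) :
    reorient v A i = sg (chi A i) • v i := by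
  by_cases h : i ∈ A <;> simp [reorient, chi, h]

/-- Relations. -/
noncomputable def rel (v : Fin n → V) : Submodule ℝ (Fin n → ℝ) :=
  LinearMap.ker (Fintype.linearCombination ℝ v)

lemma mem_rel {v : Fin n → V} {c : Fin n → ℝ} : c ∈ rel v ↔ ∑ i, c i • v i = 0 := by
  simp [rel, Fintype.linearCombination_apply]

/-- Evaluation of functionals on the configuration. -/
noncomputable def T (v : Fin n → V) : Module.Dual ℝ V →ₗ[ℝ] (Fin n → ℝ) :=
  LinearMap.pi (fun i => Module.Dual.eval ℝ V (v i))

@[simp] lemma T_apply (v : Fin n → V) (f : Module.Dual ℝ V) (i : Fin n) : T v f i = f (v i) := rfl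

lemma oactive_iff (v : Fin n → V) (A : Finset (Fin n)) (a : Fin n) :
    OActive (reorient v A) a ↔ Act (rel v) (chi A) a := by
  constructor
  · rintro ⟨c, h1, h2, h3, h4⟩
    refine ⟨fun i => sg (chi A i) * c i, ?_, ?_, ?_, ?_⟩
    · rw [mem_rel, ← h2]
      refine Finset.sum_congr rfl fun i _ => ?_
      rw [reorient_eq, smul_smul, mul_comm]
    · intro i
      simpa [← mul_assoc, sg_mul_self] using h1 i
    · simpa [← mul_assoc, sg_mul_self] using h3
    · intro i hi
      simp [h4 i hi]
  · rintro ⟨c, h2, h1, h3, h4⟩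
    refine ⟨fun i => sg (chi A i) * c i, h1, ?_, h3, fun i hi => by simp [h4 i hi]⟩
    rw [← mem_rel.1 h2]
    refine Finset.sum_congr rfl fun i _ => ?_
    rw [reorient_eq, smul_smul, mul_comm, ← mul_assoc, sg_mul_self, one_mul]

lemma odual_iff (v : Fin n → V) (A : Finset (Fin n)) (a : Fin n) :
    ODualActive (reorient v A) a ↔ Act (LinearMap.range (T v)) (chi A) a := by
  have h0 : ∀ (b : Bool) (x : ℝ), sg b * x = 0 → x = 0 := by
    intro b x h
    cases b <;> simpa using h
  constructor
  · rintro ⟨f, h1, h2, h3⟩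
    simp only [reorient_eq, map_smul, smul_eq_mul] at h1 h2 h3
    exact ⟨T v f, ⟨f, rfl⟩, h1, h2, fun i hi => h0 _ _ (h3 i hi)⟩
  · rintro ⟨_, ⟨f, rfl⟩, h1, h2, h3⟩
    refine ⟨f, ?_, ?_, ?_⟩ <;> simp only [reorient_eq, map_smul, smul_eq_mul]
    · exact h1
    · exact h2
    · intro i hi
      have := h3 i hi
      rw [T_apply] at this
      rw [this, mul_zero]

open Classical in
lemma th_eq (L : Submodule ℝ (Fin n → ℝ)) (A : Finset (Fin n)) (P : Fin n → Prop)
    (h : ∀ a, P a ↔ Act L (chi A) a) : {a | a ∉ A ∧ P a}.ncard = th L (chi A) := by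
  rw [Set.ncard_eq_toFinset_card', th, ← Finset.card_filter]
  congr 1
  ext a
  simp [h, chi]

lemma map_Z (v : Fin n → V) (A : Finset (Fin n)) :
    (Z (chi A)).map (Fintype.linearCombination ℝ v) = Submodule.span ℝ (v '' ↑A) := by
  apply le_antisymm
  · rintro _ ⟨c, hc, rfl⟩
    rw [Fintype.linearCombination_apply]
    refine Submodule.sum_mem _ fun i _ => ?_
    by_cases hi : i ∈ A
    · exact Submodule.smul_mem _ _ (Submodule.subset_span ⟨i, hi, rfl⟩)
    · rw [hc i (by simp [chi, hi]), zero_smul]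
      exact Submodule.zero_mem _
  · rw [Submodule.span_le]
    rintro _ ⟨i, hi, rfl⟩
    refine ⟨Pi.single i 1, ?_, ?_⟩
    · intro j hj
      have : j ≠ i := by
        rintro rfl
        simp [chi] at hj
        exact hj hi
      simp [this]
    · simp

lemma finrank_Z (A : Finset (Fin n)) : Module.finrank ℝ ↥(Z (chi A)) = A.card := by
  have h := map_Z (Pi.basisFun ℝ (Fin n)) A
  have h1 : Fintype.linearCombination ℝ (Pi.basisFun ℝ (Fin n)) = LinearMap.id := by
    ext i j
    simp
  rw [h1, Submodule.map_id] at h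
  rw [h]
  have hli := (Pi.basisFun ℝ (Fin n)).linearIndependent
  have h2 := finrank_span_eq_card (hli.comp (fun i : A => (i : Fin n)) Subtype.val_injective)
  have h3 : Set.range (fun i : A => (i : Fin n)) = ↑A := by
    ext i
    simp
  rw [Set.range_comp, h3] at h2
  simpa using h2

lemma N_rel (v : Fin n → V) (A : Finset (Fin n)) :
    N (rel v) (chi A) = A.card - vrank v ↑A := by
  have h := finrank_map_add (Fintype.linearCombination ℝ v) (Z (chi A))
  rw [map_Z, finrank_Z] at h
  unfold N vrank rel
  rw [inf_comm]
  omega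

lemma N_range [FiniteDimensional ℝ V] (v : Fin n → V) (A : Finset (Fin n)) :
    N (LinearMap.range (T v)) (fun i => !(chi A i)) = vrank v Set.univ - vrank v ↑A := by
  have hm : ∀ (S : Set (Fin n)) (f : Module.Dual ℝ V),
      f ∈ (Submodule.span ℝ (v '' S)).dualAnnihilator ↔ ∀ i ∈ S, f (v i) = 0 := by
    intro S f
    rw [Submodule.mem_dualAnnihilator]
    constructor
    · intro h i hi
      exact h _ (Submodule.subset_span ⟨i, hi, rfl⟩)
    · intro h
      have : Submodule.span ℝ (v '' S) ≤ LinearMap.ker f := by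
        rw [Submodule.span_le]
        rintro _ ⟨i, hi, rfl⟩
        exact h i hi
      exact fun w hw => this hw
  have h := finrank_map_add (T v) (Submodule.span ℝ (v '' (A : Set (Fin n)))).dualAnnihilator
  have h1 : (Submodule.span ℝ (v '' (A : Set (Fin n)))).dualAnnihilator.map (T v)
      = LinearMap.range (T v) ⊓ Z (fun i => !(chi A i)) := by
    ext c
    constructor
    · rintro ⟨f, hf, rfl⟩
      refine ⟨⟨f, rfl⟩, fun i hi => ?_⟩
      exact (hm _ f).1 hf i (by simpa [chi] using hi)
    · rintro ⟨⟨f, rfl⟩, hz⟩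
      exact ⟨f, (hm _ f).2 fun i hi => hz i (by simpa [chi] using hi), rfl⟩
  have h2 : (Submodule.span ℝ (v '' (A : Set (Fin n)))).dualAnnihilator ⊓ LinearMap.ker (T v)
      = (Submodule.span ℝ (v '' Set.univ)).dualAnnihilator := by
    ext f
    rw [Submodule.mem_inf, hm, hm, LinearMap.mem_ker]
    constructor
    · rintro ⟨_, h⟩ i _
      exact congrFun h i
    · intro h
      exact ⟨fun i _ => h i trivial, funext fun i => h i trivial⟩
  rw [h1, h2] at h
  have e1 := Subspace.finrank_add_finrank_dualAnnihilator_eq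
    (Submodule.span ℝ (v '' (A : Set (Fin n))))
  have e2 := Subspace.finrank_add_finrank_dualAnnihilator_eq (Submodule.span ℝ (v '' Set.univ))
  unfold N vrank
  omega

end

end Persp

/-- alternating-sum expression for `t(M,M';0,0,1)`:
`t(M,M'; 0, 0, 1) = ∑_A (-1)^(θ*_{M'}(A) + θ_M(A))`. -/
theorem statement15 {n : ℕ} {V W : Type*} [AddCommGroup V] [Module ℝ V] [FiniteDimensional ℝ V]
    [AddCommGroup W] [Module ℝ W] [FiniteDimensional ℝ W]
    (v : Fin n → V) (π : V →ₗ[ℝ] W) :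
    tuttePerspV v (π ∘ v) 0 0 =
      ∑ A : Finset (Fin n), (-1 : ℝ) ^ (thetaStar (π ∘ v) A + theta v A) := by
  have horth : Persp.Orth (LinearMap.range (Persp.T (π ∘ v))) (Persp.rel v) := by
    rintro _ ⟨f, rfl⟩ l hl
    have h := congrArg (fun x => f (π x)) (Persp.mem_rel.1 hl)
    simp only [map_sum, map_smul, map_zero, smul_eq_mul] at h
    rw [← h]
    exact Finset.sum_congr rfl fun i _ => mul_comm _ _
  have h := Persp.main _ _ horth
  unfold Persp.lhs Persp.rhs at h
  rw [← (Persp.chiEquiv n).sum_comp, ← (Persp.chiEquiv n).sum_comp] at h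
  change ∑ A : Finset (Fin n), (-1 : ℝ) ^ (Persp.N (LinearMap.range (Persp.T (π ∘ v)))
      (fun i => !(Persp.chi A i)) + Persp.N (Persp.rel v) (Persp.chi A)) =
    ∑ A : Finset (Fin n), (-1 : ℝ) ^ (Persp.th (LinearMap.range (Persp.T (π ∘ v)))
      (Persp.chi A) + Persp.th (Persp.rel v) (Persp.chi A)) at h
  unfold tuttePerspV
  refine Eq.trans (Finset.sum_congr rfl fun A _ => ?_) (h.trans (Finset.sum_congr rfl
    fun A _ => ?_))
  · rw [Persp.N_rel, Persp.N_range, pow_add, zero_sub]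
  · unfold thetaStar theta
    rw [Persp.th_eq _ A _ (Persp.odual_iff (π ∘ v) A), Persp.th_eq _ A _ (Persp.oactive_iff v A)]
end
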